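/- Let G be a finite pseudo-solvable group and let p be a prime with p ∉ {2,3,5} such that p, 3, and 5 all divide |G| and G has no element of order 3p, no element of order 5p, and no element of order 15. Suppose there exists an odd prime q dividing |G| such that G has no element of order 2q. Then for every prime r dividing |G| with r ∉ {2,3,5}: if G has no element of order 3r and no element of order 5r, then G also has no element of order 2r. (Equivalently, the subgraph of the complement of the prime graph on {r,2,3,5} having edges 3–5, 3–r, 5–r but not 2–r cannot occur together with any edge 2–q.) -/

import Mathlib

/-- A finite group is *pseudo-solvable* if it has a subnormal series whose factors are
all cyclic or isomorphic to the alternating group `A₅`. -/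
def IsPseudoSolvable (G : Type*) [Group G] : Prop :=
  ∃ (n : ℕ) (H : Fin (n + 1) → Subgroup G),
    H 0 = ⊥ ∧ H (Fin.last n) = ⊤ ∧
    ∀ i : Fin n, H i.castSucc ≤ H i.succ ∧
      ∃ hN : ((H i.castSucc).subgroupOf (H i.succ)).Normal,
        haveI := hN
        IsCyclic (H i.succ ⧸ (H i.castSucc).subgroupOf (H i.succ)) ∨
        Nonempty ((H i.succ ⧸ (H i.castSucc).subgroupOf (H i.succ)) ≃* alternatingGroup (Fin 5))

/-!
A solvable group has, for some two of any three primes dividing its order, an element whose order is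
their product, so the triangle `3`, `5`, `r` forces `G` to be nonsolvable. Two factors `A₅` would
yield an element of order `15`; hence `G` maps to `Aut A₅` with solvable kernel and with image
containing `A₅`, and every prime `r ≥ 7` dividing `|G|` divides the order of the kernel.

Then the Frattini argument supplies a supplement of the kernel that normalizes an elementary abelian
`r`-group `N`, on which elements of order `3` and `5` act fixed point freely. Let `D → A₅` be a
Frattini cover inside the supplement and let `T` be a `2`-subgroup of `D` over the Klein four group
`V`. If `T` acted on `N` through an abelian group, a fixed point free element of order `3`
normalizing `T` would centralize that group and so `V`, which is absurd. So some commutator of `T`,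
lying in the normal `2`-subgroup `P` of `D` that is Sylow in the kernel of `D → A₅`, acts
nontrivially on `N`. Therefore `D` has elements of order `6` and `10`: otherwise an element of order
`3` or `5` would act fixed point freely on both `P` and `N`, which forces `P` to act trivially. If
moreover the supplement had only one involution, it would centralize `N`; but `P` would be central
in the perfect group `D`, so the commutator would have order `2` and thus act trivially on `N`.

The elements of order `6` and `10` exclude `q = 3` and `q = 5`. If `q ≥ 7` and `G` has no element of
order `2q`, then commuting involutions of `G` coincide, because they invert a `q`-group; so all
involutions are conjugate and lie in the kernel. If `z` were the involution in the cyclic group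
generated by an element of order `2r`, the centralizer of `z` would still cover `A₅`, have order
divisible by `r`, and contain no other involution, which has just been excluded.
-/

open MonoidHom (FixedPointFree)

local notation "A₅" => alternatingGroup (Fin 5)

/-- `G` has no element of order `n`. -/
def OmitsOrder (G : Type*) [Group G] (n : ℕ) : Prop := ¬ ∃ g : G, orderOf g = n

section OmitsOrder

variable {G H : Type*} [Group G] [Group H]

theorem exists_orderOf_eq_of_dvd_orderOf [Finite G] {g : G} {m : ℕ} (h : m ∣ orderOf g) :
    ∃ x : G, orderOf x = m :=
  ⟨_, orderOf_pow_orderOf_div (orderOf_pos g).ne' h⟩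

theorem OmitsOrder.not_dvd_orderOf_map [Finite G] {n : ℕ} (h : OmitsOrder G n) (f : G →* H)
    (g : G) : ¬ n ∣ orderOf (f g) :=
  fun hd ↦ h (exists_orderOf_eq_of_dvd_orderOf (hd.trans (orderOf_map_dvd f g)))

theorem OmitsOrder.not_dvd_orderOf [Finite G] {n : ℕ} (h : OmitsOrder G n) (g : G) :
    ¬ n ∣ orderOf g :=
  h.not_dvd_orderOf_map (MonoidHom.id G) g

theorem OmitsOrder.of_surjective [Finite G] {n : ℕ} (h : OmitsOrder G n) {f : G →* H}
    (hf : Function.Surjective f) : OmitsOrder H n := by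
  rintro ⟨y, hy⟩
  obtain ⟨g, rfl⟩ := hf y
  exact h.not_dvd_orderOf_map f g hy.symm.dvd

theorem OmitsOrder.of_injective {n : ℕ} (h : OmitsOrder G n) {f : H →* G}
    (hf : Function.Injective f) : OmitsOrder H n := by
  rintro ⟨y, hy⟩
  exact h ⟨f y, (orderOf_injective f hf y).trans hy⟩

theorem OmitsOrder.subgroup {n : ℕ} (h : OmitsOrder G n) (K : Subgroup G) : OmitsOrder K n :=
  h.of_injective K.subtype_injective

theorem OmitsOrder.quotient [Finite G] {n : ℕ} (h : OmitsOrder G n) (N : Subgroup G) [N.Normal] :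
    OmitsOrder (G ⧸ N) n :=
  h.of_surjective (QuotientGroup.mk'_surjective N)

theorem OmitsOrder.not_commute [Finite G] {a b : ℕ} (h : OmitsOrder G (a * b))
    (hab : a.Coprime b) {x y : G} (hx : a ∣ orderOf x) (hy : b ∣ orderOf y) : ¬ Commute x y := by
  intro hxy
  refine h.not_dvd_orderOf (x ^ (orderOf x / a) * y ^ (orderOf y / b)) ?_
  rw [(hxy.pow_pow _ _).orderOf_mul_eq_mul_orderOf_of_coprime] <;>
    rw [orderOf_pow_orderOf_div (orderOf_pos x).ne' hx,
      orderOf_pow_orderOf_div (orderOf_pos y).ne' hy]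
  exact hab

theorem dvd_orderOf_of_isPGroup {p : ℕ} (hp : p.Prime) {P : Subgroup G} (hP : IsPGroup p P)
    {g : G} (hg : g ∈ P) (hg1 : g ≠ 1) : p ∣ orderOf g := by
  obtain ⟨k, hk⟩ := hP ⟨g, hg⟩
  replace hk : g ^ p ^ k = 1 := congrArg Subtype.val hk
  obtain ⟨j, -, hj⟩ := (Nat.dvd_prime_pow hp).1 (orderOf_dvd_of_pow_eq_one hk)
  have hj0 : j ≠ 0 := by
    rintro rfl
    exact hg1 (orderOf_eq_one_iff.1 (by rw [hj, pow_zero]))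
  exact hj ▸ dvd_pow_self p hj0

end OmitsOrder

section FixedPointFree

theorem fixedPointFree_pow {N : Type*} [Group N] {y : MulAut N} {c : ℕ} (hc : c.Prime)
    (hyc : y ^ c = 1) (hy : FixedPointFree y) {i : ℕ} (hi : i ≠ 0) (hic : i < c) :
    FixedPointFree ⇑(y ^ i) := by
  intro n hn
  have hcop : i.Coprime (orderOf y) :=
    (Nat.coprime_of_lt_prime hi hic hc).symm.coprime_dvd_right
      (orderOf_dvd_of_pow_eq_one hyc)
  obtain ⟨m, hm⟩ := exists_pow_eq_self_of_coprime hcop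
  refine hy n ?_
  have hstab : y ^ i ∈ MulAction.stabilizer (MulAut N) n := hn
  have hmem := pow_mem hstab m
  rwa [hm] at hmem

theorem prod_range_pow_apply_eq_one {N : Type*} [CommGroup N] {y : MulAut N} {c : ℕ}
    (hyc : y ^ c = 1) (hy : FixedPointFree y) (n : N) : ∏ i ∈ Finset.range c, (y ^ i) n = 1 := by
  apply hy
  have hshift : ∏ i ∈ Finset.range (c + 1), (y ^ i) n = (∏ i ∈ Finset.range c, (y ^ i) n) * n := by
    rw [Finset.prod_range_succ, hyc, MulAut.one_apply]
  rw [Finset.prod_range_succ', pow_zero, MulAut.one_apply, mul_left_inj] at hshift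
  simpa only [map_prod, pow_succ', MulAut.mul_apply] using hshift

/-- Summing `ρ v (y ^ i) ρ v⁻¹ n` over `i < c` gives zero for each `v`. As
`ρ v (y ^ i) ρ v⁻¹ = ρ (v / σ ^ i v) (y ^ i)` and `v ↦ v / σ ^ i v` is a bijection for `i ≠ 0`, the
conjugation can be dropped in those terms; comparing with the sum of `ρ v (y ^ i) n`, only the
terms with `i = 0` survive. -/
theorem pow_card_eq_prod_apply {V N : Type*} [Group V] [Fintype V] [CommGroup N]
    {ρ : V →* MulAut N} {σ : MulAut V} {y : MulAut N} (hρ : ∀ v, ρ (σ v) = y * ρ v * y⁻¹)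
    {c : ℕ} (hc : c.Prime) (hσc : σ ^ c = 1) (hyc : y ^ c = 1)
    (hσ : FixedPointFree σ) (hy : FixedPointFree y) (n : N) :
    n ^ Fintype.card V = ∏ v, ρ v n := by
  have hρi (i : ℕ) (v : V) : ρ ((σ ^ i) v) = y ^ i * ρ v * (y ^ i)⁻¹ := by
    induction i with
    | zero => simp
    | succ i ih => simp only [pow_succ', MulAut.mul_apply, hρ, ih, mul_inv_rev, mul_assoc]
  have hconj (i : ℕ) (v : V) :
      ρ (MonoidHom.commutatorMap ⇑(σ ^ i) v) ((y ^ i) n) = ρ v ((y ^ i) (ρ v⁻¹ n)) := by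
    simp only [MonoidHom.commutatorMap_apply, ← MulAut.mul_apply, div_eq_mul_inv, map_mul,
      map_inv, hρi]
    congr 1; group
  have hsum (f : V → N) : ∏ i ∈ Finset.range c, ∏ v, ρ v ((y ^ i) (f v)) = 1 := by
    rw [Finset.prod_comm]
    simp only [← map_prod, prod_range_pow_apply_eq_one hyc hy, map_one, Finset.prod_const_one]
  have hreindex (i : ℕ) (hi : i ∈ Finset.range (c - 1)) :
      ∏ v, ρ v ((y ^ (i + 1)) (ρ v⁻¹ n)) = ∏ v, ρ v ((y ^ (i + 1)) n) := by
    have hfree := fixedPointFree_pow hc hσc hσ i.succ_ne_zero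
      (Nat.add_lt_of_lt_sub (Finset.mem_range.1 hi))
    simp only [← hconj]
    exact Function.Bijective.prod_comp
      ⟨hfree.commutatorMap_injective, hfree.commutatorMap_surjective⟩ fun v ↦ ρ v ((y ^ (i + 1)) n)
  have hone := hsum fun v ↦ ρ v⁻¹ n
  have htwo := hsum fun _ ↦ n
  rw [← Nat.sub_add_cancel hc.one_le, Finset.prod_range_succ'] at hone htwo
  rw [Finset.prod_congr rfl hreindex, ← htwo, mul_right_inj] at hone
  simpa only [pow_zero, MulAut.one_apply, map_inv, MulAut.apply_inv_self, Finset.prod_const,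
    Finset.card_univ] using hone

theorem eq_one_of_fixedPointFree {V N : Type*} [Group V] [Finite V] [CommGroup N]
    {ρ : V →* MulAut N} {σ : MulAut V} {y : MulAut N} (hρ : ∀ v, ρ (σ v) = y * ρ v * y⁻¹)
    {c : ℕ} (hc : c.Prime) (hσc : σ ^ c = 1) (hyc : y ^ c = 1)
    (hσ : FixedPointFree σ) (hy : FixedPointFree y) (hN : (Nat.card N).Coprime (Nat.card V)) :
    ρ = 1 := by
  have := Fintype.ofFinite V
  ext w n
  have hfix : ρ w (n ^ Nat.card V) = n ^ Nat.card V := by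
    simp only [Nat.card_eq_fintype_card, pow_card_eq_prod_apply hρ hc hσc hyc hσ hy, map_prod,
      ← MulAut.mul_apply, ← map_mul]
    exact (Group.mulLeft_bijective w).prod_comp fun v ↦ ρ v n
  rw [map_pow] at hfix
  exact (powCoprime hN).injective hfix

theorem apply_eq_one_of_normalizer_fixedPointFree {Γ N : Type*} [Group Γ] [CommGroup N]
    (ρ : Γ →* MulAut N) {V : Subgroup Γ} [Finite V] {y : Γ}
    (hyV : y ∈ Subgroup.normalizer (V : Set Γ)) {c : ℕ} (hc : c.Prime) (hyc : y ^ c = 1)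
    (hV : ∀ v ∈ V, Commute y v → v = 1) (hy : FixedPointFree (ρ y))
    (hN : (Nat.card N).Coprime (Nat.card V)) {v : Γ} (hv : v ∈ V) : ρ v = 1 := by
  let y' : Subgroup.normalizer (V : Set Γ) := ⟨y, hyV⟩
  have hy'c : y' ^ c = 1 := Subtype.ext hyc
  have hρ (w : V) : (ρ.comp V.subtype) (V.normalizerMonoidHom y' w) =
      ρ y * (ρ.comp V.subtype) w * (ρ y)⁻¹ := by
    simp [y']
  have htriv := eq_one_of_fixedPointFree hρ hc (by rw [← map_pow, hy'c, map_one])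
    (by rw [← map_pow, hyc, map_one]) (fun w hw ↦ Subtype.ext <| hV w w.2 <|
      mul_inv_eq_iff_eq_mul.1 (congrArg Subtype.val hw)) hy hN
  exact DFunLike.congr_fun htriv ⟨v, hv⟩

theorem pow_eq_one_of_apply_eq_mul {A : Type*} [Group A] {σ : MulAut A} {c : ℕ}
    (hσc : σ ^ c = 1) {a v : A} (ha : σ a = v * a) (hv : σ v = v) : v ^ c = 1 := by
  have hpow (i : ℕ) : (σ ^ i) a = v ^ i * a := by
    induction i with
    | zero => simp
    | succ i ih => rw [pow_succ', MulAut.mul_apply, ih, map_mul, map_pow, hv, ha, ← mul_assoc,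
        pow_succ]
  simpa [hσc] using hpow c

open scoped IsMulCommutative in
/-- Apply `apply_eq_one_of_normalizer_fixedPointFree` to the subgroup `⁅y, A⁆`: an element
`v = y a y⁻¹ a⁻¹` commuting with `y` satisfies `v ^ c = 1`, hence is trivial. -/
theorem commute_of_fixedPointFree {N : Type*} [CommGroup N] {A : Subgroup (MulAut N)} [Finite A]
    [IsMulCommutative A] {y : MulAut N} (hyA : y ∈ Subgroup.normalizer (A : Set (MulAut N)))
    {c : ℕ} (hc : c.Prime) (hyc : y ^ c = 1) (hy : FixedPointFree y)
    (hAc : (Nat.card A).Coprime c) (hN : (Nat.card N).Coprime (Nat.card A))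
    {a : MulAut N} (ha : a ∈ A) : Commute y a := by
  set σ : MulAut A := A.normalizerMonoidHom ⟨y, hyA⟩ with hσ
  have hσc : σ ^ c = 1 := by
    rw [hσ, ← map_pow, show (⟨y, hyA⟩ : Subgroup.normalizer (A : Set _)) ^ c = 1 from
      Subtype.ext hyc, map_one]
  let τ : A →* A := σ.toMonoidHom / MonoidHom.id A
  let V : Subgroup (MulAut N) := τ.range.map A.subtype
  have hVA : V ≤ A := Subgroup.map_subtype_le _
  have : Finite V := Finite.Set.subset (A : Set (MulAut N)) hVA
  have hyV : y ∈ Subgroup.normalizer (V : Set (MulAut N)) := by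
    refine Subgroup.mem_normalizer_fintype ?_
    rintro _ ⟨_, ⟨x, rfl⟩, rfl⟩
    exact ⟨τ (σ x), ⟨σ x, rfl⟩, congrArg Subtype.val (map_div σ (σ x) x).symm⟩
  have hV (v : MulAut N) (hv : v ∈ V) (hyv : Commute y v) : v = 1 := by
    obtain ⟨_, ⟨x, rfl⟩, rfl⟩ := hv
    have hpow : (τ x) ^ c = 1 := pow_eq_one_of_apply_eq_mul hσc (div_mul_cancel (σ x) x).symm
      (Subtype.ext (mul_inv_eq_iff_eq_mul.2 hyv))
    have hone : τ x = 1 := (powCoprime hAc).injective (hpow.trans (one_pow c).symm)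
    rw [hone, map_one]
  have hmem : y * a * y⁻¹ * a⁻¹ ∈ V := ⟨τ ⟨a, ha⟩, ⟨⟨a, ha⟩, rfl⟩, by simp [τ, hσ, div_eq_mul_inv]⟩
  have hone := apply_eq_one_of_normalizer_fixedPointFree (MonoidHom.id _) hyV hc hyc hV hy
    (hN.coprime_dvd_right (Subgroup.card_dvd_of_le hVA)) hmem
  exact mul_inv_eq_iff_eq_mul.1 (mul_inv_eq_one.1 hone)

/-- Multiply the norm relations of the `c` elements `a * b ^ j`: for each exponent `i ≠ 0` the
factors `(a * b ^ j) ^ i = a ^ i * (b ^ i) ^ j` multiply to `1` by the norm relation of `b ^ i`. -/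
theorem pow_eq_one_of_commute_of_fixedPointFree {N : Type*} [CommGroup N] {a b : MulAut N}
    (hab : Commute a b) {c : ℕ} (hc : c.Prime) (hac : a ^ c = 1) (hbc : b ^ c = 1)
    (hb : FixedPointFree b) (habj : ∀ j : ℕ, FixedPointFree ⇑(a * b ^ j)) (n : N) :
    n ^ c = 1 := by
  have hpow (i j : ℕ) : (a * b ^ j) ^ i = a ^ i * (b ^ i) ^ j := by
    rw [(hab.pow_right j).mul_pow, ← pow_mul, ← pow_mul, mul_comm j]
  have hrow (j : ℕ) : ∏ i ∈ Finset.range c, ((a * b ^ j) ^ i) n = 1 :=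
    prod_range_pow_apply_eq_one
      (by rw [hpow, hac, hbc, one_pow, one_mul]) (habj j) n
  have hcol (i : ℕ) (hi : i ∈ Finset.range (c - 1)) :
      ∏ j ∈ Finset.range c, ((a * b ^ j) ^ (i + 1)) n = 1 := by
    have hfree := fixedPointFree_pow hc hbc hb i.succ_ne_zero
      (Nat.add_lt_of_lt_sub (Finset.mem_range.1 hi))
    have hone := prod_range_pow_apply_eq_one
      (by rw [← pow_mul, mul_comm, pow_mul, hbc, one_pow]) hfree n
    simp only [hpow, MulAut.mul_apply, ← map_prod, hone, map_one]
  have hprod : ∏ j ∈ Finset.range c, ∏ i ∈ Finset.range c, ((a * b ^ j) ^ i) n = 1 :=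
    Finset.prod_eq_one fun j _ ↦ hrow j
  rw [Finset.prod_comm, ← Nat.sub_add_cancel hc.one_le, Finset.prod_range_succ',
    Nat.sub_add_cancel hc.one_le, Finset.prod_eq_one hcol, one_mul] at hprod
  simpa only [pow_zero, MulAut.one_apply, Finset.prod_const, Finset.card_range] using hprod

theorem isCyclic_of_fixedPointFree {E N : Type*} [CommGroup E] [CommGroup N]
    (ρ : E →* MulAut N) {c : ℕ} (hc : c.Prime) (hE : ∀ e : E, e ^ c = 1)
    (hρ : ∀ e : E, e ≠ 1 → FixedPointFree (ρ e)) {n : N} (hn : n ^ c ≠ 1) : IsCyclic E := by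
  by_contra hcyc
  have : Nontrivial E := not_subsingleton_iff_nontrivial.1 fun _ ↦ hcyc inferInstance
  obtain ⟨b, hb⟩ := exists_ne (1 : E)
  obtain ⟨a, ha⟩ : ∃ a, a ∉ Subgroup.zpowers b := by
    by_contra! h
    exact hcyc ⟨b, h⟩
  refine hn (pow_eq_one_of_commute_of_fixedPointFree ((Commute.all a b).map ρ) hc
    (by rw [← map_pow, hE, map_one]) (by rw [← map_pow, hE, map_one]) (hρ b hb) (fun j ↦ ?_) n)
  rw [← map_pow, ← map_mul]
  refine hρ _ fun h ↦ ha ?_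
  rw [eq_inv_of_mul_eq_one_left h]
  exact inv_mem (Subgroup.npow_mem_zpowers b j)

end FixedPointFree

section ElementaryAbelian

/-- The group `E` is an elementary abelian `l`-group; the primality of `l` is left to the user. -/
structure IsElementaryAbelian (l : ℕ) (E : Type*) [Group E] : Prop where
  isMulCommutative : IsMulCommutative E
  pow_eq_one : ∀ e : E, e ^ l = 1

variable {G : Type*} [Group G]

theorem IsElementaryAbelian.isPGroup {E : Type*} [Group E] {l : ℕ} (hE : IsElementaryAbelian l E) :
    IsPGroup l E :=
  fun e ↦ ⟨1, by rw [pow_one, hE.pow_eq_one]⟩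

theorem exists_normal_isMulCommutative_le (R : Subgroup G) [R.Normal]
    (hs : Group.IsSolvable R) (hR : R ≠ ⊥) :
    ∃ A : Subgroup G, A.Normal ∧ IsMulCommutative A ∧ A ≤ R ∧ A ≠ ⊥ := by
  classical
  have hex := hs.solvable
  obtain ⟨n, hn⟩ : ∃ n, Nat.find hex = n + 1 := by
    refine Nat.exists_eq_succ_of_ne_zero fun h0 ↦ hR ?_
    have hbot := Nat.find_spec hex
    rw [h0, derivedSeries_zero] at hbot
    rw [← R.range_subtype, MonoidHom.range_eq_map, hbot, Subgroup.map_bot]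
  have hbot := Nat.find_spec hex
  rw [hn, derivedSeries_succ, Subgroup.commutator_self_eq_bot_iff] at hbot
  exact ⟨(derivedSeries R n).map R.subtype, inferInstance,
    Subgroup.map_isMulCommutative _ _, Subgroup.map_subtype_le _, fun h ↦
      Nat.find_min hex (hn ▸ n.lt_succ_self) ((Subgroup.map_eq_bot_iff_of_injective _
        R.subtype_injective).1 h)⟩

open scoped IsMulCommutative in
theorem exists_normal_isElementaryAbelian_le [Finite G] (R : Subgroup G) [R.Normal]
    (hs : Group.IsSolvable R) (hR : R ≠ ⊥) :
    ∃ N : Subgroup G, N.Normal ∧ N ≤ R ∧ N ≠ ⊥ ∧ ∃ l : ℕ, l.Prime ∧ IsElementaryAbelian l N := by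
  obtain ⟨A, hA, hcomm, hAR, hA1⟩ := exists_normal_isMulCommutative_le R hs hR
  have : Nontrivial A := (Subgroup.nontrivial_iff_ne_bot A).2 hA1
  obtain ⟨l, hl, hlA⟩ := Nat.exists_prime_and_dvd (Finite.one_lt_card (α := A)).ne'
  have : Fact l.Prime := ⟨hl⟩
  let Ω : Subgroup A := (powMonoidHom l).ker
  have : Ω.Characteristic := Subgroup.characteristic_iff_le_comap.2 fun e x (hx : x ^ l = 1) ↦
    show e x ^ l = 1 by rw [← map_pow, hx, map_one]
  refine ⟨Ω.map A.subtype, inferInstance, (Subgroup.map_subtype_le _).trans hAR, ?_, l, hl,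
    Subgroup.map_isMulCommutative _ _, ?_⟩
  · obtain ⟨x, hx⟩ := exists_prime_orderOf_dvd_card' l hlA
    rw [ne_eq, Subgroup.map_eq_bot_iff_of_injective _ A.subtype_injective]
    intro h
    have hxΩ : x ∈ Ω := show x ^ l = 1 from hx ▸ pow_orderOf_eq_one x
    rw [h, Subgroup.mem_bot, ← orderOf_eq_one_iff, hx] at hxΩ
    exact hl.ne_one hxΩ
  · rintro ⟨_, x, hx, rfl⟩
    have hval : (x : G) ^ l = 1 := congrArg Subtype.val (show x ^ l = 1 from hx)
    exact Subtype.ext hval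

theorem exists_normal_isElementaryAbelian_le_of_isPGroup [Finite G] {p : ℕ} [Fact p.Prime]
    {R : Subgroup G} [R.Normal] (hR : IsPGroup p R) (hR1 : R ≠ ⊥) :
    ∃ N : Subgroup G, N.Normal ∧ N ≤ R ∧ N ≠ ⊥ ∧ IsElementaryAbelian p N := by
  have := hR.isNilpotent
  obtain ⟨N, hN, hNR, hN1, l, hl, hNl⟩ :=
    exists_normal_isElementaryAbelian_le R inferInstance hR1
  have : Fact l.Prime := ⟨hl⟩
  obtain rfl : l = p := by
    by_contra hne
    exact hN1 (disjoint_self.1 (IsPGroup.disjoint_of_ne l p hne N N hNl.isPGroup (hR.to_le hNR)))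
  exact ⟨N, hN, hNR, hN1, hNl⟩

theorem conjNormal_apply_eq_self_iff {N : Subgroup G} [N.Normal] {y : G} {n : N} :
    MulAut.conjNormal y n = n ↔ Commute y n := by
  rw [← Subtype.coe_inj, MulAut.conjNormal_apply, mul_inv_eq_iff_eq_mul, commute_iff_eq]

theorem OmitsOrder.fixedPointFree_conjNormal [Finite G] {a b : ℕ} (h : OmitsOrder G (a * b))
    (ha : a.Prime) (hab : a.Coprime b) {N : Subgroup G} [N.Normal] (hN : IsPGroup a N) {y : G}
    (hy : b ∣ orderOf y) : FixedPointFree (MulAut.conjNormal y : MulAut N) := by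
  intro n hn
  by_contra hn1
  exact h.not_commute hab (dvd_orderOf_of_isPGroup ha hN n.2 (by simpa using hn1)) hy
    (conjNormal_apply_eq_self_iff.1 hn).symm

theorem coprime_card_of_isPGroup {H : Type*} [Group H] [Finite H] {p m : ℕ} (hp : p.Prime)
    (hH : IsPGroup p H) (hm : p.Coprime m) : (Nat.card H).Coprime m := by
  have : Fact p.Prime := ⟨hp⟩
  obtain ⟨k, hk⟩ := IsPGroup.iff_card.1 hH
  exact hk ▸ hm.pow_left k

theorem dvd_card_of_isPGroup {H : Type*} [Group H] [Finite H] [Nontrivial H] {p : ℕ}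
    (hp : p.Prime) (hH : IsPGroup p H) : p ∣ Nat.card H := by
  have : Fact p.Prime := ⟨hp⟩
  obtain ⟨k, hk, hcard⟩ := hH.nontrivial_iff_card.1 ‹_›
  exact hcard ▸ dvd_pow_self p hk.ne'

theorem dvd_card_quotient {b : ℕ} (hb : b.Prime) {N : Subgroup G}
    (hG : b ∣ Nat.card G) (hN : ¬ b ∣ Nat.card N) : b ∣ Nat.card (G ⧸ N) := by
  rw [N.card_eq_card_quotient_mul_card_subgroup] at hG
  exact (hb.dvd_mul.1 hG).resolve_right hN

theorem card_quotient_lt_card [Finite G] {N : Subgroup G} (hN : N ≠ ⊥) :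
    Nat.card (G ⧸ N) < Nat.card G := by
  rw [N.card_eq_card_quotient_mul_card_subgroup]
  exact lt_mul_of_one_lt_right Nat.card_pos (N.one_lt_card_iff_ne_bot.2 hN)

end ElementaryAbelian

section Solvable

variable {G : Type*} [Group G]

theorem map_eq_range_of_sup_eq_top {X : Type*} [Group X] {f : G →* X} {M K : Subgroup G}
    (hK : K ≤ f.ker) (hMK : M ⊔ K = ⊤) : M.map f = f.range := by
  rw [MonoidHom.range_eq_map, ← hMK, Subgroup.map_sup, (Subgroup.map_eq_bot_iff K).2 hK, sup_bot_eq]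

theorem exists_mem_normalizer_sylow_orderOf_eq [Finite G] {K : Subgroup G} [K.Normal] {b c : ℕ}
    [Fact b.Prime] (hc : c.Prime) (hcG : c ∣ Nat.card G) (hcK : ¬ c ∣ Nat.card K)
    (S : Sylow b K) :
    ∃ y ∈ Subgroup.normalizer ((S : Subgroup K).map K.subtype : Set G), orderOf y = c := by
  have : Fact c.Prime := ⟨hc⟩
  set M := Subgroup.normalizer ((S : Subgroup K).map K.subtype : Set G)
  have hsurj : Function.Surjective ((QuotientGroup.mk' K).comp M.subtype) := by
    rw [← MonoidHom.range_eq_top, MonoidHom.range_comp, M.range_subtype,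
      map_eq_range_of_sup_eq_top (QuotientGroup.ker_mk' K).ge S.normalizer_sup_eq_top,
      QuotientGroup.range_mk']
  have hcM : c ∣ Nat.card M :=
    (dvd_card_quotient hc hcG hcK).trans (Subgroup.card_dvd_of_surjective _ hsurj)
  obtain ⟨y, hy⟩ := exists_prime_orderOf_dvd_card' c hcM
  exact ⟨y, y.2, (Subgroup.orderOf_coe y).trans hy⟩

theorem exists_normal_dvd_card_and_not_dvd_card [Finite G] (hs : Group.IsSolvable G) {b c : ℕ}
    (hb : b.Prime) (hc : c.Prime) (hbc : b ≠ c) (hbG : b ∣ Nat.card G) (hcG : c ∣ Nat.card G) :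
    ∃ K : Subgroup G, K.Normal ∧ (b ∣ Nat.card K ∧ ¬ c ∣ Nat.card K ∨
      c ∣ Nat.card K ∧ ¬ b ∣ Nat.card K) := by
  induction hn : Nat.card G using Nat.strong_induction_on generalizing G with
  | _ n ih =>
  have htop : (⊤ : Subgroup G) ≠ ⊥ := by
    rw [ne_eq, ← Subgroup.card_eq_one, Subgroup.card_top]
    exact fun h ↦ hb.one_lt.not_ge (h ▸ Nat.le_of_dvd Nat.card_pos hbG)
  obtain ⟨N, hN, -, hN1, l, hl, hNl⟩ :=
    exists_normal_isElementaryAbelian_le (⊤ : Subgroup G) inferInstance htop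
  have : Nontrivial N := (Subgroup.nontrivial_iff_ne_bot N).2 hN1
  have hlN : l ∣ Nat.card N := dvd_card_of_isPGroup hl hNl.isPGroup
  have hndvd {m : ℕ} (hm : m.Prime) (hml : m ≠ l) : ¬ m ∣ Nat.card N := fun h ↦
    hm.one_lt.ne' (Nat.eq_one_of_dvd_coprimes (coprime_card_of_isPGroup hl hNl.isPGroup
      ((Nat.coprime_primes hl hm).2 hml.symm)) h dvd_rfl)
  rcases eq_or_ne b l with rfl | hbl
  · exact ⟨N, hN, .inl ⟨hlN, hndvd hc hbc.symm⟩⟩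
  rcases eq_or_ne c l with rfl | hcl
  · exact ⟨N, hN, .inr ⟨hlN, hndvd hb hbc⟩⟩
  obtain ⟨K, hK, h⟩ := ih _ (hn ▸ card_quotient_lt_card hN1) (G := G ⧸ N) inferInstance
    (dvd_card_quotient hb hbG (hndvd hb hbl)) (dvd_card_quotient hc hcG (hndvd hc hcl)) rfl
  have hcard : Nat.card (K.comap (QuotientGroup.mk' N)) = Nat.card N * Nat.card K :=
    QuotientGroup.card_preimage_mk N (K : Set (G ⧸ N))
  refine ⟨K.comap (QuotientGroup.mk' N), hK.comap _, ?_⟩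
  rwa [hcard, hb.dvd_mul, hc.dvd_mul, or_iff_right (hndvd hb hbl), or_iff_right (hndvd hc hcl)]

open scoped IsMulCommutative in
theorem dvd_card_of_omitsOrder [Finite G] {N K : Subgroup G} [N.Normal] [K.Normal] (hN1 : N ≠ ⊥)
    {a b c : ℕ} (ha : a.Prime) (hb : b.Prime) (hc : c.Prime) (hab : a ≠ b) (hac : a ≠ c)
    (hbc : b ≠ c) (hN : IsElementaryAbelian a N) (hbK : b ∣ Nat.card K) (hcG : c ∣ Nat.card G)
    (hGab : OmitsOrder G (a * b)) (hGac : OmitsOrder G (a * c)) (hGbc : OmitsOrder G (b * c)) :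
    c ∣ Nat.card K := by
  by_contra hcK
  have : Fact b.Prime := ⟨hb⟩
  have := hN.isMulCommutative
  have hcop {m n : ℕ} (hm : m.Prime) (hn : n.Prime) : m ≠ n → m.Coprime n :=
    (Nat.coprime_primes hm hn).2
  let S : Sylow b K := default
  obtain ⟨y, hyS, hyc⟩ := exists_mem_normalizer_sylow_orderOf_eq hc hcG hcK S
  have hSb : IsPGroup b ((S : Subgroup K).map K.subtype) := S.isPGroup'.map _
  have hfpfS (v : G) (hv : v ∈ (S : Subgroup K).map K.subtype) (hyv : Commute y v) : v = 1 := by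
    by_contra hv1
    exact hGbc.not_commute (hcop hb hc hbc) (dvd_orderOf_of_isPGroup hb hSb hv hv1) hyc.symm.dvd
      hyv.symm
  obtain ⟨n, hn1⟩ := Subgroup.ne_bot_iff_exists_ne_one.1 hN1
  obtain ⟨v, hv⟩ := exists_prime_orderOf_dvd_card' b (S.dvd_card_of_dvd_card hbK)
  have hvn := apply_eq_one_of_normalizer_fixedPointFree MulAut.conjNormal hyS hc
    (hyc ▸ pow_orderOf_eq_one y) hfpfS
    (hGac.fixedPointFree_conjNormal ha (hcop ha hc hac) hN.isPGroup hyc.symm.dvd)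
    (coprime_card_of_isPGroup ha hN.isPGroup
      (coprime_card_of_isPGroup hb hSb (hcop hb ha hab.symm)).symm)
    (Subgroup.mem_map_of_mem K.subtype v.2)
  refine hn1 (hGab.fixedPointFree_conjNormal ha (hcop ha hb hab) hN.isPGroup (y := v) ?_ n
    (DFunLike.congr_fun hvn n))
  rw [Subgroup.orderOf_coe, Subgroup.orderOf_coe, hv]

/-- Lucido's three primes lemma. -/
theorem card_le_two_of_pairwise_omitsOrder [Finite G] (hs : Group.IsSolvable G) {s : Finset ℕ}
    (hsG : s ⊆ (Nat.card G).primeFactors)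
    (hom : (s : Set ℕ).Pairwise fun x y ↦ OmitsOrder G (x * y)) : s.card ≤ 2 := by
  induction hn : Nat.card G using Nat.strong_induction_on generalizing G with
  | _ n ih =>
  have hprime {x : ℕ} (hx : x ∈ s) : x.Prime := Nat.prime_of_mem_primeFactors (hsG hx)
  have hdvd {x : ℕ} (hx : x ∈ s) : x ∣ Nat.card G := Nat.dvd_of_mem_primeFactors (hsG hx)
  rcases eq_or_ne (⊤ : Subgroup G) ⊥ with htop | htop
  · have hcard : Nat.card G = 1 := by
      rw [← Subgroup.card_top, htop, Subgroup.card_bot]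
    rw [hcard, Nat.primeFactors_one, Finset.subset_empty] at hsG
    simp [hsG]
  obtain ⟨N, hN, -, hN1, l, hl, hNl⟩ :=
    exists_normal_isElementaryAbelian_le (⊤ : Subgroup G) inferInstance htop
  by_cases hls : l ∈ s
  · suffices (s.erase l).card ≤ 1 by rw [← Finset.card_erase_add_one hls]; omega
    refine Finset.card_le_one.2 fun b hb c hc ↦ ?_
    rw [Finset.mem_erase] at hb hc
    by_contra hbc
    have hom' {x y : ℕ} (hx : x ∈ s) (hy : y ∈ s) (hxy : x ≠ y) : OmitsOrder G (x * y) :=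
      hom hx hy hxy
    obtain ⟨K, hK, ⟨hbK, hcK⟩ | ⟨hcK, hbK⟩⟩ := exists_normal_dvd_card_and_not_dvd_card hs
      (hprime hb.2) (hprime hc.2) hbc (hdvd hb.2) (hdvd hc.2)
    · exact hcK (dvd_card_of_omitsOrder hN1 hl (hprime hb.2) (hprime hc.2) hb.1.symm hc.1.symm hbc
        hNl hbK (hdvd hc.2) (hom' hls hb.2 hb.1.symm) (hom' hls hc.2 hc.1.symm)
        (hom' hb.2 hc.2 hbc))
    · exact hbK (dvd_card_of_omitsOrder hN1 hl (hprime hc.2) (hprime hb.2) hc.1.symm hb.1.symm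
        (Ne.symm hbc) hNl hcK (hdvd hb.2) (hom' hls hc.2 hc.1.symm) (hom' hls hb.2 hb.1.symm)
        (hom' hc.2 hb.2 (Ne.symm hbc)))
  · refine ih _ (hn ▸ card_quotient_lt_card hN1) (G := G ⧸ N) inferInstance (fun x hx ↦ ?_)
      (hom.mono' fun x y h ↦ h.quotient N) rfl
    have hxN : (Nat.card N).Coprime x := coprime_card_of_isPGroup hl hNl.isPGroup
      ((Nat.coprime_primes hl (hprime hx)).2 fun h ↦ hls (h ▸ hx))
    refine Nat.mem_primeFactors.2 ⟨hprime hx, dvd_card_quotient (hprime hx) (hdvd hx) fun h ↦ ?_,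
      Nat.card_pos.ne'⟩
    exact (hprime hx).ne_one (Nat.eq_one_of_dvd_coprimes hxN h dvd_rfl)

end Solvable

section SimpleGroup

/-- The group of inner automorphisms of `S`. -/
abbrev innerAut (S : Type*) [Group S] : Subgroup (MulAut S) := (MulAut.conj : S →* MulAut S).range

variable {S : Type*} [Group S]

theorem mul_conj_mul_inv (f : MulAut S) (s : S) :
    f * MulAut.conj s * f⁻¹ = MulAut.conj (f s) := by
  ext x
  simp [MulAut.mul_apply]

instance innerAut_normal : (innerAut S).Normal where
  conj_mem := by
    rintro _ ⟨s, rfl⟩ f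
    exact ⟨f s, (mul_conj_mul_inv f s).symm⟩

theorem conj_injective_of_not_isSolvable [IsSimpleGroup S] (hS : ¬ Group.IsSolvable S) :
    Function.Injective (MulAut.conj : S →* MulAut S) := by
  refine (MonoidHom.ker_eq_bot_iff _).1 ((MonoidHom.normal_ker _).eq_bot_or_eq_top.resolve_right
    fun h ↦ hS (Group.isSolvable_of_comm fun a b ↦ ?_))
  have ha : MulAut.conj a = 1 := MonoidHom.mem_ker.1 (h ▸ Subgroup.mem_top a)
  exact mul_inv_eq_iff_eq_mul.1 (DFunLike.congr_fun ha b)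

theorem isPerfect_of_not_isSolvable [IsSimpleGroup S] (hS : ¬ Group.IsSolvable S) :
    Group.IsPerfect S where
  commutator_eq_top := by
    refine (inferInstance : (commutator S).Normal).eq_bot_or_eq_top.resolve_left fun h ↦ hS ⟨1, ?_⟩
    rw [derivedSeries_one, h]

theorem eq_bot_or_innerAut_le [IsSimpleGroup S] {Y : Subgroup (MulAut S)}
    (hY : innerAut S ≤ Subgroup.normalizer (Y : Set (MulAut S))) : Y = ⊥ ∨ innerAut S ≤ Y := by
  have hconj (s : S) {y : MulAut S} (hy : y ∈ Y) : MulAut.conj s * y * (MulAut.conj s)⁻¹ ∈ Y :=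
    (Subgroup.mem_normalizer_iff.1 (hY ⟨s, rfl⟩) y).1 hy
  have hnormal : (Y.comap MulAut.conj).Normal :=
    ⟨fun s hs t ↦ by simpa only [Subgroup.mem_comap, map_mul, map_inv] using hconj t hs⟩
  refine hnormal.eq_bot_or_eq_top.imp (fun h ↦ (Subgroup.eq_bot_iff_forall Y).2 fun y hy ↦ ?_)
    fun h ↦ ?_
  · ext s
    have hmem : s * (y s)⁻¹ ∈ Y.comap MulAut.conj := by
      have hcomm := mul_mem (hconj s hy) (inv_mem hy)
      rwa [mul_assoc _ _ y⁻¹, mul_assoc, ← map_inv, ← mul_assoc y, mul_conj_mul_inv, ← map_mul,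
        map_inv] at hcomm
    rw [h, Subgroup.mem_bot, mul_inv_eq_one] at hmem
    exact hmem.symm
  · rintro _ ⟨s, rfl⟩
    exact Subgroup.mem_comap.1 (h ▸ Subgroup.mem_top s)

open scoped Pointwise in
theorem toPermHom_sylow_injective [IsSimpleGroup S] {p : ℕ} (P : Sylow p S) (hP : ¬ P.Normal) :
    Function.Injective (MulAction.toPermHom (MulAut S) (Sylow p S)) := by
  have hker := MonoidHom.normal_ker (MulAction.toPermHom (MulAut S) (Sylow p S))
  refine (MonoidHom.ker_eq_bot_iff _).1 ((eq_bot_or_innerAut_le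
    (Subgroup.normalizer_eq_top_iff.2 hker ▸ le_top)).resolve_right fun h ↦ hP ⟨fun x hx s ↦ ?_⟩)
  have hs : MulAut.conj s • P = P := Equiv.congr_fun (MonoidHom.mem_ker.1 (h ⟨s, rfl⟩)) P
  rw [← hs]
  exact Subgroup.smul_mem_pointwise_smul x _ _ hx

end SimpleGroup

section AlternatingGroup

theorem card_alternatingGroup_five : Nat.card A₅ = 60 := by
  rw [nat_card_alternatingGroup]
  simp [Nat.factorial]

theorem not_isSolvable_alternatingGroup_five : ¬ Group.IsSolvable A₅ :=
  have : Group.IsPerfect A₅ := ⟨commutator_alternatingGroup_eq_top (by simp)⟩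
  Group.IsPerfect.not_isSolvable A₅

theorem not_normal_sylow_five_alternatingGroup_five (P : Sylow 5 A₅) : ¬ P.Normal := by
  have : Fact (Nat.Prime 5) := ⟨Nat.prime_five⟩
  intro hP
  rcases hP.eq_bot_or_eq_top with h | h
  · have hdvd := P.dvd_card_of_dvd_card (by rw [card_alternatingGroup_five]; decide)
    rw [h, Subgroup.card_bot] at hdvd
    omega
  · have hcop := coprime_card_of_isPGroup Nat.prime_five P.isPGroup' (m := 2) (by decide)
    rw [h, Subgroup.card_top, card_alternatingGroup_five] at hcop
    exact absurd hcop (by decide)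

theorem card_sylow_five_alternatingGroup_five : Nat.card (Sylow 5 A₅) = 6 := by
  have : Fact (Nat.Prime 5) := ⟨Nat.prime_five⟩
  let P : Sylow 5 A₅ := default
  have hindex : (P : Subgroup A₅).index ∣ 12 := by
    have hdvd : (P : Subgroup A₅).index ∣ 5 * 12 :=
      (Subgroup.index_dvd_card _).trans card_alternatingGroup_five.dvd
    exact ((Nat.prime_five.coprime_iff_not_dvd.2 P.not_dvd_index).symm).dvd_of_dvd_mul_left hdvd
  have hdvd : Nat.card (Sylow 5 A₅) ∈ Nat.divisors 12 :=
    Nat.mem_divisors.2 ⟨P.card_dvd_index.trans hindex, by decide⟩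
  have hmod : Nat.card (Sylow 5 A₅) % 5 = 1 := card_sylow_modEq_one 5 A₅
  have hne : Nat.card (Sylow 5 A₅) ≠ 1 := fun h ↦
    have := (Nat.card_eq_one_iff_unique.1 h).1
    not_normal_sylow_five_alternatingGroup_five P P.normal_of_subsingleton
  have hcases : ∀ n ∈ Nat.divisors 12, n % 5 = 1 → n ≠ 1 → n = 6 := by decide
  exact hcases _ hdvd hmod hne

theorem not_dvd_card_mulAut_alternatingGroup_five {r : ℕ} (hr : r.Prime) (h7 : 7 ≤ r) :
    ¬ r ∣ Nat.card (MulAut A₅) := by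
  have : Fact (Nat.Prime 5) := ⟨Nat.prime_five⟩
  have hdvd := Subgroup.card_dvd_of_injective _ (toPermHom_sylow_injective default
    (not_normal_sylow_five_alternatingGroup_five _))
  rw [Nat.card_perm, card_sylow_five_alternatingGroup_five] at hdvd
  exact fun h ↦ absurd (hr.dvd_factorial.1 (h.trans hdvd)) (by omega)

end AlternatingGroup

section AlmostSimpleQuotient

variable {G S : Type*} [Group G] [Group S]

/-- The homomorphism `ψ : G →* MulAut S` has a range lying between the inner automorphism group and
the full automorphism group of `S`, and a solvable kernel. For `S` nonabelian simple, this presents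
`G` as an extension of an almost simple group with socle `S` by a solvable group. -/
structure IsAlmostSimpleQuotient (ψ : G →* MulAut S) : Prop where
  innerAut_le_range : innerAut S ≤ ψ.range
  isSolvable_ker : Group.IsSolvable ψ.ker

theorem not_innerAut_le_of_isSolvable [IsSimpleGroup S] (hS : ¬ Group.IsSolvable S)
    (Y : Subgroup (MulAut S)) [Group.IsSolvable Y] : ¬ innerAut S ≤ Y := fun h ↦
  hS <| Group.isSolvable_of_isSolvable_injective
    (f := MulAut.conj.codRestrict Y fun s ↦ h ⟨s, rfl⟩)
    ((MonoidHom.injective_codRestrict _ _ _).2 (conj_injective_of_not_isSolvable hS))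

theorem le_ker_or_innerAut_le_map [IsSimpleGroup S] {ψ : G →* MulAut S}
    (hψ : innerAut S ≤ ψ.range) (M : Subgroup G) [hM : M.Normal] :
    M ≤ ψ.ker ∨ innerAut S ≤ M.map ψ := by
  rw [← Subgroup.map_eq_bot_iff]
  refine eq_bot_or_innerAut_le (hψ.trans ?_)
  rw [MonoidHom.range_eq_map, ← Subgroup.normalizer_eq_top_iff.2 hM]
  exact Subgroup.le_normalizer_map ψ

namespace IsAlmostSimpleQuotient

variable [IsSimpleGroup S] {ψ : G →* MulAut S}

theorem le_ker_of_isSolvable (hψ : IsAlmostSimpleQuotient ψ) (hS : ¬ Group.IsSolvable S)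
    (M : Subgroup G) [M.Normal] [Group.IsSolvable M] : M ≤ ψ.ker :=
  have := Group.isSolvable_of_surjective (ψ.subgroupMap_surjective M)
  (le_ker_or_innerAut_le_map hψ.innerAut_le_range M).resolve_right
    (not_innerAut_le_of_isSolvable hS _)

theorem characteristic_ker (hψ : IsAlmostSimpleQuotient ψ) (hS : ¬ Group.IsSolvable S) :
    ψ.ker.Characteristic := by
  refine Subgroup.characteristic_iff_map_le.2 fun α ↦ ?_
  have hsolv := hψ.isSolvable_ker
  have := (inferInstance : ψ.ker.Normal).map α.toMonoidHom α.surjective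
  have := Group.isSolvable_of_surjective (α.toMonoidHom.subgroupMap_surjective ψ.ker)
  exact hψ.le_ker_of_isSolvable hS _

theorem characteristic_comap_innerAut (hψ : IsAlmostSimpleQuotient ψ)
    (hS : ¬ Group.IsSolvable S) : ((innerAut S).comap ψ).Characteristic := by
  have hker := Subgroup.characteristic_iff_map_eq.1 (hψ.characteristic_ker hS)
  refine Subgroup.characteristic_iff_le_map.2 fun α ↦ ?_
  have hkerL : ψ.ker ≤ (innerAut S).comap ψ := MonoidHom.ker_le_comap _ _
  have hmap := Subgroup.map_comap_eq_self hψ.innerAut_le_range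
  have := (inferInstance : ((innerAut S).comap ψ).Normal).map α.toMonoidHom α.surjective
  rcases le_ker_or_innerAut_le_map hψ.innerAut_le_range
    (((innerAut S).comap ψ).map α.toMonoidHom) with h | h
  · have hle : (innerAut S).comap ψ ≤ ψ.ker := by
      rwa [← hker α, Subgroup.map_le_map_iff_of_injective α.injective] at h
    rw [(Subgroup.map_eq_bot_iff _).2 hle] at hmap
    exact absurd hmap.ge (not_innerAut_le_of_isSolvable hS ⊥)
  · refine Subgroup.comap_mono (f := ψ) h |>.trans ?_
    rw [Subgroup.comap_map_eq, sup_le_iff]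
    exact ⟨le_rfl, (hker α).ge.trans (Subgroup.map_mono hkerL)⟩

end IsAlmostSimpleQuotient

theorem exists_mulAut_comp_eq {H L : Type*} [Group H] [Group L] {π : L →* S}
    (hπ : Function.Surjective π) (ρ : H →* MulAut L) (hker : ∀ h l, π l = 1 → π (ρ h l) = 1) :
    ∃ ψ : H →* MulAut S, ∀ h l, ψ h (π l) = π (ρ h l) := by
  have hlift (h : H) : ∃ f : S →* S, ∀ l, f (π l) = π (ρ h l) :=
    ⟨π.liftOfSurjective hπ ⟨π.comp (ρ h).toMonoidHom, hker h⟩,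
      fun l ↦ MonoidHom.liftOfRightInverse_comp_apply _ _ _ _ _⟩
  choose f hf using hlift
  have hmul (h₁ h₂ : H) (s : S) : f (h₁ * h₂) s = f h₁ (f h₂ s) := by
    obtain ⟨l, rfl⟩ := hπ s
    rw [hf, hf, hf, map_mul, MulAut.mul_apply]
  have hone (s : S) : f 1 s = s := by
    obtain ⟨l, rfl⟩ := hπ s
    rw [hf, map_one, MulAut.one_apply]
  let ψ (h : H) : MulAut S :=
    { f h with
      invFun := f h⁻¹
      left_inv := fun s ↦ by simp [← hmul, hone]
      right_inv := fun s ↦ by simp [← hmul, hone] }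
  exact ⟨MonoidHom.mk' ψ fun h₁ h₂ ↦ MulEquiv.ext (hmul h₁ h₂), hf⟩

namespace IsAlmostSimpleQuotient

variable {H : Type*} [Group H]

theorem comp_injective {ψ : G →* MulAut S} (hψ : IsAlmostSimpleQuotient ψ) {f : H →* G}
    (hf : Function.Injective f) (hrange : innerAut S ≤ (ψ.comp f).range) :
    IsAlmostSimpleQuotient (ψ.comp f) where
  innerAut_le_range := hrange
  isSolvable_ker :=
    have := hψ.isSolvable_ker
    Group.isSolvable_of_isSolvable_injective
      (f := (f.comp (ψ.comp f).ker.subtype).codRestrict ψ.ker fun h ↦ h.2)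
      ((MonoidHom.injective_codRestrict _ _ _).2 (hf.comp (Subgroup.subtype_injective _)))

theorem exists_extension [IsSimpleGroup S] (hS : ¬ Group.IsSolvable S) {K : Subgroup H} [K.Normal]
    {ψ : K →* MulAut S} (hψ : IsAlmostSimpleQuotient ψ) :
    ∃ ψ' : H →* MulAut S, ∀ k : K, ψ' k = ψ k := by
  have hinj := conj_injective_of_not_isSolvable hS
  have := hψ.characteristic_comap_innerAut hS
  set L := (innerAut S).comap ψ
  let π : L →* S :=
    (MonoidHom.ofInjective hinj).symm.toMonoidHom.comp (ψ.subgroupComap (innerAut S))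
  have hπ (l : L) : MulAut.conj (π l) = ψ l := MonoidHom.apply_ofInjective_symm hinj _
  have hπ_surj : Function.Surjective π := fun s ↦ by
    obtain ⟨k, hk⟩ := hψ.innerAut_le_range ⟨s, rfl⟩
    exact ⟨⟨k, s, hk.symm⟩, hinj ((hπ _).trans hk)⟩
  have hker (l : L) : π l = 1 ↔ ψ l = 1 := by rw [← hπ, map_eq_one_iff _ hinj]
  let ρ : H →* MulAut L := (MulAut.characteristic L).comp MulAut.conjNormal
  have hρ (h : H) (l : L) : (ρ h l : K) = MulAut.conjNormal h (l : K) := rfl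
  obtain ⟨ψ', hψ'⟩ := exists_mulAut_comp_eq hπ_surj ρ fun h l hl ↦ by
    rw [hker] at hl ⊢
    have hchar := hψ.characteristic_ker hS
    exact Subgroup.characteristic_iff_le_comap.1 hchar (MulAut.conjNormal h) hl
  refine ⟨ψ', fun k ↦ MulEquiv.ext fun s ↦ hinj ?_⟩
  obtain ⟨l, rfl⟩ := hπ_surj s
  have hconj : MulAut.conjNormal (k : H) (l : K) = k * l * k⁻¹ := Subtype.ext (by simp)
  rw [hψ', hπ, hρ, hconj, ← mul_conj_mul_inv, hπ, map_mul, map_mul, map_inv]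

theorem of_extension {K : Subgroup H} [K.Normal] {ψ : K →* MulAut S} {ψ' : H →* MulAut S}
    (hψ : IsAlmostSimpleQuotient ψ) (hψ' : ∀ k : K, ψ' k = ψ k)
    (hsolv : Group.IsSolvable (ψ'.ker.map (QuotientGroup.mk' K))) : IsAlmostSimpleQuotient ψ' where
  innerAut_le_range := hψ.innerAut_le_range.trans <| by
    rintro _ ⟨k, rfl⟩
    exact ⟨k, hψ' k⟩
  isSolvable_ker := by
    have := hψ.isSolvable_ker
    let ι : ψ.ker →* ψ'.ker := (K.subtype.comp ψ.ker.subtype).codRestrict ψ'.ker fun k ↦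
      (hψ' k).trans k.2
    refine Group.isSolvable_of_ker_le_range ι ((QuotientGroup.mk' K).subgroupMap ψ'.ker) ?_
    intro x hx
    have hxK : (x : H) ∈ K := by
      rw [← QuotientGroup.eq_one_iff]
      exact congrArg Subtype.val (MonoidHom.mem_ker.1 hx)
    exact ⟨⟨⟨x, hxK⟩, (hψ' _).symm.trans x.2⟩, rfl⟩

end IsAlmostSimpleQuotient

theorem isAlmostSimpleQuotient_conj_comp [IsSimpleGroup S] (hS : ¬ Group.IsSolvable S)
    {f : G →* S} (hf : Function.Surjective f) (hker : Group.IsSolvable f.ker) :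
    IsAlmostSimpleQuotient (MulAut.conj.comp f) where
  innerAut_le_range := by
    rw [MonoidHom.range_comp, f.range_eq_top.2 hf, ← MonoidHom.range_eq_map]
  isSolvable_ker := by
    rwa [← MonoidHom.comap_ker, (MonoidHom.ker_eq_bot_iff _).2
      (conj_injective_of_not_isSolvable hS)]

theorem isSolvable_or_isAlmostSimpleQuotient_congr {G H : Type*} [Group G] [Group H] (e : G ≃* H)
    (hG : Group.IsSolvable G ∨ ∃ ψ : G →* MulAut S, IsAlmostSimpleQuotient ψ) :
    Group.IsSolvable H ∨ ∃ ψ : H →* MulAut S, IsAlmostSimpleQuotient ψ := by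
  rcases hG with hG | ⟨ψ, hψ⟩
  · exact .inl (Group.isSolvable_of_surjective (f := e.toMonoidHom) e.surjective)
  · refine .inr ⟨_, hψ.comp_injective (f := e.symm.toMonoidHom) e.symm.injective ?_⟩
    rw [MonoidHom.range_comp, MonoidHom.range_eq_top.2 e.symm.surjective, ← MonoidHom.range_eq_map]
    exact hψ.innerAut_le_range

section Series

variable [IsSimpleGroup S] {H : Type*} [Group H]

-- If `ψ'.ker` covered `H ⧸ K ≃* S`, then `H` would have a section `S × S`.
theorem map_ker_eq_bot_of_omitsOrder [Finite H] {K : Subgroup H} [K.Normal] {ψ' : H →* MulAut S}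
    (hS : ¬ Group.IsSolvable S) (hψ' : innerAut S ≤ K.map ψ') (e : H ⧸ K ≃* S) {a b : ℕ}
    (ha : a.Prime) (hb : b.Prime) (hab : a ≠ b) (haS : a ∣ Nat.card S) (hbS : b ∣ Nat.card S)
    (hH : OmitsOrder H (a * b)) : ψ'.ker.map (QuotientGroup.mk' K) = ⊥ := by
  have : Fact a.Prime := ⟨ha⟩
  have : Fact b.Prime := ⟨hb⟩
  have := (MulEquiv.isSimpleGroup_congr e).2 ‹_›
  have hnormal := (MonoidHom.normal_ker ψ').map _ (QuotientGroup.mk'_surjective K)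
  refine hnormal.eq_bot_or_eq_top.resolve_right fun htop ↦ ?_
  have hfin : Finite S := Finite.of_equiv _ e.toEquiv
  obtain ⟨s, hs⟩ := exists_prime_orderOf_dvd_card' a haS
  obtain ⟨t, ht⟩ := exists_prime_orderOf_dvd_card' b hbS
  obtain ⟨x, hxψ, hx⟩ : e.symm t ∈ ψ'.ker.map (QuotientGroup.mk' K) := htop ▸ Subgroup.mem_top _
  obtain ⟨k, hkK, hk⟩ := hψ' ⟨s, rfl⟩
  refine hH.not_dvd_orderOf_map (ψ'.prod (QuotientGroup.mk' K)) (x * k) (dvd_of_eq ?_)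
  have hk1 : QuotientGroup.mk' K k = 1 := (QuotientGroup.eq_one_iff k).2 hkK
  rw [MonoidHom.prod_apply, map_mul, map_mul, MonoidHom.mem_ker.1 hxψ, hk, hx, hk1, one_mul,
    mul_one, Prod.orderOf_mk, orderOf_injective _ (conj_injective_of_not_isSolvable hS),
    MulEquiv.orderOf_eq, hs, ht, (((Nat.coprime_primes ha hb).2 hab).lcm_eq_mul)]

theorem isSolvable_or_isAlmostSimpleQuotient_of_normal [Finite H] (hS : ¬ Group.IsSolvable S)
    {a b : ℕ} (ha : a.Prime) (hb : b.Prime) (hab : a ≠ b) (haS : a ∣ Nat.card S)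
    (hbS : b ∣ Nat.card S) (hH : OmitsOrder H (a * b)) (K : Subgroup H) [K.Normal]
    (hquot : IsCyclic (H ⧸ K) ∨ Nonempty (H ⧸ K ≃* S))
    (hK : Group.IsSolvable K ∨ ∃ ψ : K →* MulAut S, IsAlmostSimpleQuotient ψ) :
    Group.IsSolvable H ∨ ∃ ψ : H →* MulAut S, IsAlmostSimpleQuotient ψ := by
  have hcyclic (h : IsCyclic (H ⧸ K)) : Group.IsSolvable (H ⧸ K) :=
    Group.isSolvable_of_comm fun x y ↦ h.isMulCommutative.is_comm.comm x y
  rcases hK with hK | ⟨ψ, hψ⟩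
  · refine hquot.imp (fun h ↦ ?_) fun ⟨e⟩ ↦ ⟨_, isAlmostSimpleQuotient_conj_comp hS
      (f := e.toMonoidHom.comp (QuotientGroup.mk' K))
      (e.surjective.comp (QuotientGroup.mk'_surjective K)) ?_⟩
    · have := hcyclic h
      exact Group.isSolvable_of_ker_le_range K.subtype (QuotientGroup.mk' K) (by simp)
    · rwa [← MonoidHom.comap_ker, (MonoidHom.ker_eq_bot_iff _).2 e.injective, MonoidHom.comap_bot,
        QuotientGroup.ker_mk']
  · obtain ⟨ψ', hψ'⟩ := hψ.exists_extension hS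
    refine .inr ⟨ψ', hψ.of_extension hψ' ?_⟩
    rcases hquot with h | ⟨⟨e⟩⟩
    · have := hcyclic h
      infer_instance
    · rw [map_ker_eq_bot_of_omitsOrder hS ?_ e ha hb hab haS hbS hH]
      · infer_instance
      · refine hψ.innerAut_le_range.trans ?_
        rintro _ ⟨k, rfl⟩
        exact ⟨k, k.2, hψ' k⟩

end Series

end AlmostSimpleQuotient

theorem IsPseudoSolvable.isSolvable_or_isAlmostSimpleQuotient {G : Type*} [Group G] [Finite G]
    (hG : IsPseudoSolvable G) (h15 : OmitsOrder G (3 * 5)) :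
    Group.IsSolvable G ∨ ∃ ψ : G →* MulAut A₅, IsAlmostSimpleQuotient ψ := by
  obtain ⟨n, H, hbot, htop, hstep⟩ := hG
  have hterm (i : Fin (n + 1)) :
      Group.IsSolvable (H i) ∨ ∃ ψ : H i →* MulAut A₅, IsAlmostSimpleQuotient ψ := by
    induction i using Fin.induction with
    | zero => exact .inl (hbot ▸ inferInstance)
    | succ i ih =>
      obtain ⟨hle, hnormal, hquot⟩ := hstep i
      exact isSolvable_or_isAlmostSimpleQuotient_of_normal not_isSolvable_alternatingGroup_five
        Nat.prime_three Nat.prime_five (by decide) (by rw [card_alternatingGroup_five]; decide)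
        (by rw [card_alternatingGroup_five]; decide) (h15.subgroup _) _ hquot
        (isSolvable_or_isAlmostSimpleQuotient_congr (Subgroup.subgroupOfEquivOfLe hle).symm ih)
  exact isSolvable_or_isAlmostSimpleQuotient_congr ((MulEquiv.subgroupCongr htop).trans
    Subgroup.topEquiv) (hterm (Fin.last n))

section FrattiniCover

variable {D X : Type*} [Group D] [Group X]

/-- A surjective homomorphism is a Frattini cover if no proper subgroup of its domain maps onto its
codomain, which for finite groups says that its kernel lies in the Frattini subgroup. -/
structure IsFrattiniCover (φ : D →* X) : Prop where
  surjective : Function.Surjective φ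
  eq_top_of_map_eq_top : ∀ K : Subgroup D, K.map φ = ⊤ → K = ⊤

theorem exists_isFrattiniCover {G : Type*} [Group G] [Finite G] {ψ : G →* X} {Y : Subgroup X}
    (hY : Y ≤ ψ.range) :
    ∃ (D : Subgroup G) (φ : D →* Y), IsFrattiniCover φ ∧ ∀ d : D, (φ d : X) = ψ d := by
  obtain ⟨D, hD, hmin⟩ := Set.Finite.exists_minimal (s := {D : Subgroup G | D.map ψ = Y})
    (Set.toFinite _) ⟨Y.comap ψ, Subgroup.map_comap_eq_self hY⟩
  let φ : D →* Y := (ψ.comp D.subtype).codRestrict Y fun d ↦ hD.le ⟨d, d.2, rfl⟩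
  refine ⟨D, φ, ⟨?_, fun K hK ↦ ?_⟩, fun _ ↦ rfl⟩
  · rintro ⟨y, hy⟩
    obtain ⟨d, hd, rfl⟩ := hD.ge hy
    exact ⟨⟨d, hd⟩, rfl⟩
  · have hKψ : (K.map D.subtype).map ψ = Y := by
      rw [Subgroup.map_map, ← Y.range_subtype, MonoidHom.range_eq_map, ← hK, Subgroup.map_map]
      rfl
    rw [eq_top_iff, ← Subgroup.map_le_map_iff_of_injective D.subtype_injective,
      ← MonoidHom.range_eq_map, D.range_subtype]
    exact hmin hKψ (Subgroup.map_subtype_le K)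

namespace IsFrattiniCover

variable {φ : D →* X}

theorem comp_mulEquiv (hφ : IsFrattiniCover φ) {Y : Type*} [Group Y] (e : X ≃* Y) :
    IsFrattiniCover (e.toMonoidHom.comp φ) where
  surjective := e.surjective.comp hφ.surjective
  eq_top_of_map_eq_top K hK := hφ.eq_top_of_map_eq_top K <| by
    rw [← Subgroup.map_map] at hK
    refine Subgroup.map_injective (f := e.toMonoidHom) e.injective ?_
    rw [hK, ← MonoidHom.range_eq_map, MonoidHom.range_eq_top.2 e.surjective]

theorem le_ker_or_eq_top [IsSimpleGroup X] (hφ : IsFrattiniCover φ) (M : Subgroup D)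
    [hM : M.Normal] :
    M ≤ φ.ker ∨ M = ⊤ :=
  (hM.map φ hφ.surjective).eq_bot_or_eq_top.imp (Subgroup.map_eq_bot_iff M).1
    (hφ.eq_top_of_map_eq_top M)

theorem isPerfect [Group.IsPerfect X] (hφ : IsFrattiniCover φ) : Group.IsPerfect D where
  commutator_eq_top := hφ.eq_top_of_map_eq_top _ <| by
    rw [commutator_def, Subgroup.map_commutator, ← MonoidHom.range_eq_map,
      MonoidHom.range_eq_top.2 hφ.surjective, ← commutator_def, Group.IsPerfect.commutator_eq_top]

theorem exists_normal_isPGroup [Finite D] (hφ : IsFrattiniCover φ) (p : ℕ) [Fact p.Prime] :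
    ∃ P : Subgroup D, P.Normal ∧ IsPGroup p P ∧ ∀ T : Subgroup D, IsPGroup p T → T ⊓ φ.ker ≤ P := by
  let P : Sylow p φ.ker := default
  have hnormalizer := hφ.eq_top_of_map_eq_top _ <|
    (map_eq_range_of_sup_eq_top le_rfl P.normalizer_sup_eq_top).trans
      (MonoidHom.range_eq_top.2 hφ.surjective)
  have hP := Subgroup.normalizer_eq_top_iff.1 hnormalizer
  have hPnormal : (P : Subgroup φ.ker).Normal := by
    rw [← Subgroup.comap_map_eq_self_of_injective φ.ker.subtype_injective P]
    exact hP.comap _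
  have := Sylow.unique_of_normal P hPnormal
  refine ⟨(P : Subgroup φ.ker).map φ.ker.subtype, hP, P.isPGroup'.map _, fun T hT ↦ ?_⟩
  have hTker : IsPGroup p (T.subgroupOf φ.ker) := hT.comap_of_injective _ φ.ker.subtype_injective
  obtain ⟨Q, hQ⟩ := hTker.exists_le_sylow
  rw [Subsingleton.elim Q P] at hQ
  rw [← Subgroup.subgroupOf_map_subtype]
  exact Subgroup.map_mono hQ

end IsFrattiniCover

end FrattiniCover

section UniqueInvolution

theorem index_le_two_of_forall_mul_mem {G : Type*} [Group G] {H : Subgroup G}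
    (h : ∀ a b, a ∉ H → b ∉ H → a * b ∈ H) : H.index ≤ 2 := by
  by_cases hH : H = ⊤
  · simp [hH]
  obtain ⟨a, ha⟩ : ∃ a, a ∉ H := by simpa [Subgroup.eq_top_iff'] using hH
  refine (Subgroup.index_eq_two_iff.2 ⟨a, fun b ↦ ?_⟩).le
  by_cases hb : b ∈ H
  · exact .inr ⟨hb, fun hba ↦ ha ((H.mul_mem_cancel_left hb).1 hba)⟩
  · exact .inl ⟨h b a hb ha, hb⟩

theorem isSquare_mul_of_subsingleton_orderOf_eq_two {A : Type*} [CommGroup A] [Finite A]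
    (hA : {a : A | orderOf a = 2}.Subsingleton) {a b : A} (ha : ¬ IsSquare a) (hb : ¬ IsSquare b) :
    IsSquare (a * b) := by
  let f : A →* A := powMonoidHom 2
  have hsquare : ∀ c, c ∈ f.range ↔ IsSquare c := fun c ↦ by
    simp [f, isSquare_iff_exists_sq, eq_comm]
  have hker : Nat.card f.ker ≤ 2 := by
    rw [← SetLike.coe_sort_coe, Nat.card_coe_set_eq]
    calc (f.ker : Set A).ncard ≤ (insert 1 {a : A | orderOf a = 2}).ncard := by
          refine Set.ncard_le_ncard (fun c hc ↦ ?_) (Set.toFinite _)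
          rw [Set.mem_insert_iff, or_iff_not_imp_left]
          exact orderOf_eq_prime hc
      _ ≤ {a : A | orderOf a = 2}.ncard + 1 := Set.ncard_insert_le _ _
      _ ≤ 2 := Nat.succ_le_succ (Set.ncard_le_one_iff_subsingleton.2 hA)
  have hindex : f.range.index ≤ 2 := Subgroup.index_range.trans_le hker
  rw [← hsquare] at ha hb ⊢
  have htwo : f.range.index = 2 := by
    have hpos := Subgroup.FiniteIndex.index_ne_zero (H := f.range)
    have hone : f.range.index ≠ 1 := fun h ↦ ha (Subgroup.index_eq_one.1 h ▸ Subgroup.mem_top a)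
    lia
  exact (Subgroup.mul_mem_iff_of_index_two htwo).2 (iff_of_false ha hb)

section

variable {B : Type*} [Group B] {A : Subgroup B}

theorem not_isSquare_sq_of_notMem (hAB : A ≤ Subgroup.center B)
    (hinv : ∀ x : B, orderOf x = 2 → x ∈ A) {x : B} (hx : x ∉ A) (hxx : x ^ 2 ∈ A) :
    ¬ IsSquare (⟨x ^ 2, hxx⟩ : A) := by
  rintro ⟨⟨c, hc⟩, hcc⟩
  have hsq : x ^ 2 = c ^ 2 := (congrArg Subtype.val hcc).trans (sq c).symm
  have hcx : Commute x c⁻¹ := Subgroup.mem_center_iff.1 (hAB (A.inv_mem hc)) x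
  refine hx ((A.mul_mem_cancel_right (A.inv_mem hc)).1 ?_)
  by_cases h1 : x * c⁻¹ = 1
  · exact h1 ▸ A.one_mem
  · exact hinv _ (orderOf_eq_prime (by rw [hcx.mul_pow, hsq, inv_pow, mul_inv_cancel]) h1)

open scoped IsMulCommutative in
theorem mul_mem_of_commute_of_notMem [Finite A] (hAB : A ≤ Subgroup.center B)
    (hsq : ∀ x : B, x ^ 2 ∈ A) (hinv : ∀ x : B, orderOf x = 2 → x ∈ A)
    (huniq : {x : B | orderOf x = 2}.Subsingleton) {x y : B} (hx : x ∉ A) (hy : y ∉ A)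
    (hxy : Commute x y) : x * y ∈ A := by
  by_contra hmem
  have : IsMulCommutative A :=
    .of_comm fun a b ↦ Subtype.ext (Subgroup.mem_center_iff.1 (hAB b.2) a)
  have huniqA : {a : A | orderOf a = 2}.Subsingleton := fun a ha b hb ↦ Subtype.ext <|
    huniq ((Subgroup.orderOf_coe a).trans ha) ((Subgroup.orderOf_coe b).trans hb)
  have hsquare := isSquare_mul_of_subsingleton_orderOf_eq_two huniqA
    (not_isSquare_sq_of_notMem hAB hinv hx (hsq x)) (not_isSquare_sq_of_notMem hAB hinv hy (hsq y))
  have hxy2 : (⟨x ^ 2, hsq x⟩ * ⟨y ^ 2, hsq y⟩ : A) = ⟨(x * y) ^ 2, hsq _⟩ :=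
    Subtype.ext (hxy.mul_pow 2).symm
  exact not_isSquare_sq_of_notMem hAB hinv hmem (hsq _) (hxy2 ▸ hsquare)

theorem mem_center_of_orderOf_eq_two (huniq : {x : B | orderOf x = 2}.Subsingleton) {z : B}
    (hz : orderOf z = 2) : z ∈ Subgroup.center B := by
  refine Subgroup.mem_center_iff.2 fun x ↦ mul_inv_eq_iff_eq_mul.1 (huniq ?_ hz)
  exact ((MulAut.conj x).orderOf_eq z).trans hz

open scoped commutatorElement in
theorem commutatorElement_sq_eq_one_of_mem_center {x y : B} (hx : x ^ 2 ∈ Subgroup.center B)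
    (hxy : ⁅x, y⁆ ∈ Subgroup.center B) : ⁅x, y⁆ ^ 2 = 1 := by
  calc ⁅x, y⁆ ^ 2 = ⁅x ^ 2, y⁆ := by
        rw [sq x, commutatorElement_mul_left_eq_conj_mul, Subgroup.mem_center_iff.1 hxy x,
          mul_inv_cancel_right, sq]
    _ = 1 := commutatorElement_eq_one_iff_mul_comm.2 (Subgroup.mem_center_iff.1 hx y).symm

open scoped commutatorElement in
theorem commutatorElement_sq_eq_one (hsq : ∀ x : B, x ^ 2 ∈ Subgroup.center B) (x y : B) :
    ⁅x, y⁆ ^ 2 = 1 := by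
  refine commutatorElement_sq_eq_one_of_mem_center (hsq x) ?_
  have heq : ⁅x, y⁆ = (x * y) ^ 2 * (y⁻¹ * (x ^ 2)⁻¹) * y⁻¹ := by
    simp only [commutatorElement_def, sq]; group
  rw [heq, Subgroup.mem_center_iff.1 (inv_mem (hsq x)) y⁻¹, mul_assoc, mul_assoc, ← mul_inv_rev,
    ← sq]
  exact mul_mem (hsq _) (mul_mem (inv_mem (hsq x)) (inv_mem (hsq y)))

open scoped commutatorElement in
theorem index_centralizer_singleton_le_two (hsq : ∀ x : B, x ^ 2 ∈ Subgroup.center B)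
    (huniq : {x : B | orderOf x = 2}.Subsingleton) (x : B) :
    (Subgroup.centralizer {x}).index ≤ 2 := by
  refine index_le_two_of_forall_mul_mem fun a b ha hb ↦ ?_
  rw [Subgroup.mem_centralizer_singleton_iff, ← commutatorElement_eq_one_iff_mul_comm] at ha hb ⊢
  have horder : ∀ c, ⁅c, x⁆ ≠ 1 → orderOf ⁅c, x⁆ = 2 := fun c ↦
    orderOf_eq_prime (commutatorElement_sq_eq_one hsq c x)
  rw [commutatorElement_mul_left_eq_conj_mul, huniq (horder b hb) (horder a ha),
    Subgroup.mem_center_iff.1 (mem_center_of_orderOf_eq_two huniq (horder a ha)) a,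
    mul_inv_cancel_right, ← sq, commutatorElement_sq_eq_one hsq]

theorem index_le_four_of_subsingleton_orderOf_eq_two [Finite A] (hAB : A ≤ Subgroup.center B)
    (hsq : ∀ x : B, x ^ 2 ∈ A) (hinv : ∀ x : B, orderOf x = 2 → x ∈ A)
    (huniq : {x : B | orderOf x = 2}.Subsingleton) : A.index ≤ 4 := by
  by_cases hA : A = ⊤
  · simp [hA]
  obtain ⟨x, hx⟩ : ∃ x, x ∉ A := by simpa [Subgroup.eq_top_iff'] using hA
  have hAC : A ≤ Subgroup.centralizer {x} := hAB.trans (Subgroup.center_le_centralizer _)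
  have hrel : A.relIndex (Subgroup.centralizer {x}) ≤ 2 := by
    refine index_le_two_of_forall_mul_mem fun a b ha hb ↦ ?_
    rw [Subgroup.mem_subgroupOf] at ha hb ⊢
    have hmul : ∀ c : Subgroup.centralizer {x}, (c : B) ∉ A → x * c ∈ A := fun c hc ↦
      mul_mem_of_commute_of_notMem hAB hsq hinv huniq hx hc
        (Subgroup.mem_centralizer_singleton_iff.1 c.2).symm
    have hax : Commute x (a : B) := (Subgroup.mem_centralizer_singleton_iff.1 a.2).symm
    have heq : x * a * (x * b) = x ^ 2 * (a * b : B) := by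
      rw [hax.symm.mul_mul_mul_comm, sq]
    exact (A.mul_mem_cancel_left (hsq x)).1 (heq ▸ A.mul_mem (hmul a ha) (hmul b hb))
  calc A.index = A.relIndex (Subgroup.centralizer {x}) * (Subgroup.centralizer {x}).index :=
        (Subgroup.relIndex_mul_index hAC).symm
    _ ≤ 2 * 2 := Nat.mul_le_mul hrel <|
      index_centralizer_singleton_le_two (fun x ↦ hAB (hsq x)) huniq x

end

theorem isSolvable_perm_of_card_le_four {α : Type*} [Finite α] (hα : Nat.card α ≤ 4) :
    Group.IsSolvable (Equiv.Perm α) := by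
  classical
  have := Fintype.ofFinite α
  have halt : Group.IsSolvable (alternatingGroup α) := by
    obtain h3 | h4 := Nat.le_or_eq_of_le_succ hα
    · have := alternatingGroup.isMulCommutative_of_card_le_three h3
      exact Group.isSolvable_of_comm mul_comm'
    · have := alternatingGroup.kleinFour_isKleinFour h4
      have hcomm : Group.IsSolvable (commutator (alternatingGroup α)) := by
        rw [← alternatingGroup.kleinFour_eq_commutator h4]
        have := IsKleinFour.isMulCommutative (G := alternatingGroup.kleinFour α)
        exact Group.isSolvable_of_comm mul_comm'
      exact (Group.isSolvable_iff_subgroup_quotient _).2 ⟨hcomm, Group.isSolvable_of_comm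
        (mul_comm (G := Abelianization (alternatingGroup α)))⟩
  exact Group.isSolvable_of_ker_le_range (alternatingGroup α).subtype Equiv.Perm.sign
    (by rw [Subgroup.range_subtype]; rfl)

theorem le_center_of_card_le_four {D : Type*} [Group D] [Group.IsPerfect D] {N : Subgroup D}
    [N.Normal] [Finite N] (hN : Nat.card N ≤ 4) : N ≤ Subgroup.center D := by
  have := isSolvable_perm_of_card_le_four hN
  let f : D →* Equiv.Perm N := (MulAut.toPerm N).comp MulAut.conjNormal
  have hf : f.range = ⊥ := by
    have := Group.IsPerfect.range (f := f)
    by_contra hne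
    have := (Subgroup.nontrivial_iff_ne_bot _).2 hne
    exact Group.IsPerfect.not_isSolvable (G := f.range) inferInstance
  refine fun n hn ↦ Subgroup.mem_center_iff.2 fun d ↦ ?_
  have hfd : f d = 1 := f.range_eq_bot_iff.1 hf ▸ rfl
  have hdn : MulAut.conjNormal d (⟨n, hn⟩ : N) = ⟨n, hn⟩ := congrArg (· ⟨n, hn⟩) hfd
  exact conjNormal_apply_eq_self_iff.1 hdn

theorem le_center_of_isPGroup_two {D : Type*} [Group D] [Finite D] [Group.IsPerfect D]
    (hD : {a : D | orderOf a = 2}.Subsingleton) {S : Subgroup D} [S.Normal] (hS : IsPGroup 2 S) :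
    S ≤ Subgroup.center D := by
  let π := QuotientGroup.mk' (Subgroup.center D)
  have hπ : Function.Surjective π := QuotientGroup.mk'_surjective _
  have hker : π.ker = Subgroup.center D := QuotientGroup.ker_mk' _
  by_contra hSc
  have := (inferInstance : S.Normal).map π hπ
  obtain ⟨N, hN, -, hN1, hNl⟩ := exists_normal_isElementaryAbelian_le_of_isPGroup (hS.map π)
    (by rwa [Ne, Subgroup.map_eq_bot_iff, hker])
  have hcard : Nat.card N ≤ 4 := by
    have hindex := index_le_four_of_subsingleton_orderOf_eq_two (B := N.comap π)
      (A := π.ker.subgroupOf (N.comap π)) ?_ ?_ ?_ ?_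
    · rwa [← Subgroup.relIndex, ← MonoidHom.comap_bot, Subgroup.relIndex_comap,
        Subgroup.map_comap_eq_self_of_surjective hπ, Subgroup.relIndex_bot_left] at hindex
    · rw [hker]
      exact fun x hx ↦ Subgroup.mem_center_iff.2 fun y ↦
        Subtype.ext (Subgroup.mem_center_iff.1 hx y)
    · intro x
      have hx := hNl.pow_eq_one ⟨π x, x.2⟩
      rw [Subgroup.mem_subgroupOf, MonoidHom.mem_ker]
      simpa using congrArg Subtype.val hx
    · intro x hx
      rw [Subgroup.mem_subgroupOf, hker]
      exact mem_center_of_orderOf_eq_two hD ((Subgroup.orderOf_coe x).trans hx)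
    · exact fun x hx y hy ↦ Subtype.ext <|
        hD ((Subgroup.orderOf_coe x).trans hx) ((Subgroup.orderOf_coe y).trans hy)
  have hNc := le_center_of_card_le_four hcard
  rw [Group.IsPerfect.center_quotient_center_eq_bot] at hNc
  exact hN1 (le_bot_iff.1 hNc)

end UniqueInvolution

section LiftingPSubgroups

variable {D X : Type*} [Group D] [Group X] [Finite D]

theorem exists_mul_mem_normalizer_map_sylow {p : ℕ} [Fact p.Prime] {W : Subgroup D}
    (P : Sylow p W) {d : D} (hd : d ∈ Subgroup.normalizer (W : Set D)) :
    ∃ w ∈ W, w * d ∈ Subgroup.normalizer ((P : Subgroup W).map W.subtype : Set D) := by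
  let f : MulAut W := W.normalizerMonoidHom ⟨d, hd⟩
  obtain ⟨w, hw⟩ := MulAction.exists_smul_eq W P (f • P)
  refine ⟨(w : D)⁻¹, W.inv_mem w.2, Subgroup.mem_normalizer_fintype ?_⟩
  rintro _ ⟨t, ht, rfl⟩
  have hft : f t ∈ (w • P : Sylow p W) := hw ▸ Subgroup.smul_mem_pointwise_smul t f P ht
  refine ⟨_, Subgroup.mem_pointwise_smul_iff_inv_smul_mem.1 hft, ?_⟩
  simp [f, MulAut.smul_def, ← map_inv, MulAut.conj_apply, mul_assoc]

theorem exists_isPGroup_map_eq {φ : D →* X} (hφ : Function.Surjective φ) {p : ℕ}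
    [Fact p.Prime] {V : Subgroup X} (hV : IsPGroup p V) :
    ∃ T : Subgroup D, IsPGroup p T ∧ T.map φ = V ∧
      Subgroup.normalizer (V : Set X) ≤ (Subgroup.normalizer (T : Set D)).map φ := by
  have hsurj := φ.subgroupComap_surjective_of_surjective V hφ
  let P : Sylow p (V.comap φ) := default
  set T := (P : Subgroup (V.comap φ)).map (V.comap φ).subtype
  have hTV : T.map φ = V := by
    have := Finite.of_surjective _ hsurj
    have htop : (P : Subgroup (V.comap φ)).map (φ.subgroupComap V) = ⊤ :=
      ((P.mapSurjective hsurj).is_maximal' (hV.to_subgroup ⊤) le_top).symm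
    have hcomp : φ.comp (V.comap φ).subtype = V.subtype.comp (φ.subgroupComap V) := rfl
    rw [Subgroup.map_map, hcomp, ← Subgroup.map_map, htop, ← MonoidHom.range_eq_map,
      Subgroup.range_subtype]
  refine ⟨T, P.isPGroup'.map _, hTV, fun y hy ↦ ?_⟩
  obtain ⟨d, rfl⟩ := hφ y
  have hd : d ∈ Subgroup.normalizer (V.comap φ : Set D) :=
    Subgroup.mem_normalizer_iff.2 fun w ↦ by simpa using Subgroup.mem_normalizer_iff.1 hy (φ w)
  obtain ⟨w, hw, hwd⟩ := exists_mul_mem_normalizer_map_sylow P hd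
  have hVT : V ≤ (Subgroup.normalizer (T : Set D)).map φ :=
    hTV ▸ Subgroup.map_mono Subgroup.le_normalizer
  refine ((Subgroup.map φ _).mul_mem_cancel_left (hVT hw)).1 ?_
  exact map_mul φ w d ▸ Subgroup.mem_map_of_mem φ hwd

theorem exists_not_isMulCommutative_map {N : Type*} [CommGroup N] {φ : D →* X}
    (hφ : Function.Surjective φ) {p c : ℕ} [Fact p.Prime] (hc : c.Prime) (hpc : p.Coprime c)
    {V : Subgroup X} (hV : IsPGroup p V) (hVV : Subgroup.centralizer (V : Set X) ≤ V)
    (hcV : c ∣ Nat.card (Subgroup.normalizer (V : Set X))) (hcφ : ¬ c ∣ Nat.card φ.ker)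
    (ρ : D →* MulAut N) (hker : ρ.ker ≤ φ.ker) (hN : (Nat.card N).Coprime p)
    (hρ : ∀ x, orderOf x = c → FixedPointFree (ρ x)) :
    ∃ T : Subgroup D, IsPGroup p T ∧ T.map φ = V ∧ ¬ IsMulCommutative (T.map ρ) := by
  obtain ⟨T, hT, rfl, hnorm⟩ := exists_isPGroup_map_eq hφ hV
  refine ⟨T, hT, rfl, fun _ ↦ ?_⟩
  have := Fact.mk hc
  obtain ⟨⟨x, hx⟩, hxc⟩ := exists_prime_orderOf_dvd_card'
    (G := Subgroup.normalizer (T : Set D)) c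
    (hcV.trans ((Subgroup.card_dvd_of_le hnorm).trans (Subgroup.card_map_dvd _ φ)))
  rw [Subgroup.orderOf_mk] at hxc
  have := Finite.of_surjective _ (ρ.subgroupMap_surjective T)
  have hfix : ∀ t ∈ T, Commute (φ t) (φ x) := fun t ht ↦ by
    have hxt := commute_of_fixedPointFree (Subgroup.le_normalizer_map ρ ⟨x, hx, rfl⟩) hc
      (by rw [← map_pow, ← hxc, pow_orderOf_eq_one, map_one]) (hρ x hxc)
      (coprime_card_of_isPGroup Fact.out (hT.map ρ) hpc)
      (coprime_card_of_isPGroup Fact.out (hT.map ρ) hN.symm).symm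
      (Subgroup.mem_map_of_mem ρ ht)
    have hmem : (x * t) * (t * x)⁻¹ ∈ ρ.ker := by
      rw [MonoidHom.mem_ker, map_mul, map_inv, map_mul, map_mul, hxt.eq, mul_inv_cancel]
    have := hker hmem
    rw [MonoidHom.mem_ker, map_mul, map_inv, map_mul, map_mul, mul_inv_eq_one] at this
    exact this.symm
  have hφx : φ x ∈ T.map φ := hVV <| Subgroup.mem_centralizer_iff.2 <| by
    rintro _ ⟨t, ht, rfl⟩
    exact hfix t ht
  have hφx1 : φ x = 1 := by
    by_contra hne
    have hpx := (dvd_orderOf_of_isPGroup Fact.out hV hφx hne).trans (orderOf_map_dvd φ x)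
    rw [hxc] at hpx
    exact (Fact.out : p.Prime).one_lt.ne' (Nat.eq_one_of_dvd_coprimes hpc dvd_rfl hpx)
  refine hcφ (hxc ▸ ?_)
  rw [← Subgroup.orderOf_mk x (φ.mem_ker.2 hφx1)]
  exact orderOf_dvd_natCard _

end LiftingPSubgroups

section KleinFour

theorem IsElementaryAbelian.closure {G : Type*} [Group G] {s : Set G} {l : ℕ}
    (hcomm : ∀ x ∈ s, ∀ y ∈ s, x * y = y * x) (hl : ∀ x ∈ s, x ^ l = 1) :
    IsElementaryAbelian l (Subgroup.closure s) where
  isMulCommutative := Subgroup.isMulCommutative_closure hcomm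
  pow_eq_one := by
    have := Subgroup.isMulCommutative_closure hcomm
    rintro ⟨x, hx⟩
    refine Subtype.ext (?_ : x ^ l = 1)
    induction hx using Subgroup.closure_induction with
    | mem x hx => exact hl x hx
    | one => exact one_pow l
    | mul x y hx hy ihx ihy =>
      have hxy : Commute x y :=
        congrArg Subtype.val (mul_comm' (⟨x, hx⟩ : Subgroup.closure s) ⟨y, hy⟩)
      rw [hxy.mul_pow, ihx, ihy, one_mul]
    | inv x _ ih => rw [inv_pow, ih, inv_one]

set_option maxRecDepth 100000 in
theorem exists_isElementaryAbelian_two_alternatingGroup_five :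
    ∃ V : Subgroup A₅, IsElementaryAbelian 2 V ∧ Subgroup.centralizer (V : Set A₅) ≤ V ∧
      3 ∣ Nat.card (Subgroup.normalizer (V : Set A₅)) := by
  let a : A₅ := ⟨Equiv.swap 0 1 * Equiv.swap 1 2, by rw [Equiv.Perm.mem_alternatingGroup]; decide⟩
  let b : A₅ := ⟨Equiv.swap 0 1 * Equiv.swap 2 3, by rw [Equiv.Perm.mem_alternatingGroup]; decide⟩
  let c : A₅ := ⟨Equiv.swap 0 2 * Equiv.swap 1 3, by rw [Equiv.Perm.mem_alternatingGroup]; decide⟩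
  have hb : b ∈ Subgroup.closure {b, c} := Subgroup.subset_closure (by simp)
  have hc : c ∈ Subgroup.closure {b, c} := Subgroup.subset_closure (by simp)
  refine ⟨Subgroup.closure {b, c}, .closure ?_ ?_, fun g hg ↦ ?_, ?_⟩
  · rintro x (rfl | rfl) y (rfl | rfl) <;> decide
  · rintro x (rfl | rfl) <;> decide
  · have hgen : ∀ g : A₅, b * g = g * b → c * g = g * c → g = 1 ∨ g = b ∨ g = c ∨ g = b * c := by
      decide
    rw [Subgroup.mem_centralizer_iff] at hg
    obtain rfl | rfl | rfl | rfl := hgen g (hg b hb) (hg c hc)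
    exacts [one_mem _, hb, hc, mul_mem hb hc]
  · have ha : a ∈ Subgroup.normalizer (Subgroup.closure {b, c} : Set A₅) := by
      refine Subgroup.mem_normalizer_fintype fun x hx ↦ ?_
      have hclosure : Subgroup.closure {b, c} ≤
          (Subgroup.closure {b, c}).comap (MulAut.conj a).toMonoidHom := by
        have hab : a * b * a⁻¹ = b * c := by decide
        have hac : a * c * a⁻¹ = b := by decide
        rw [Subgroup.closure_le]
        rintro x (rfl | rfl)
        · change a * b * a⁻¹ ∈ Subgroup.closure {b, c}
          exact hab ▸ mul_mem hb hc
        · change a * c * a⁻¹ ∈ Subgroup.closure {b, c}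
          exact hac ▸ hb
      exact hclosure hx
    have : Fact (Nat.Prime 3) := ⟨Nat.prime_three⟩
    have h3 : orderOf a = 3 := orderOf_eq_prime (by decide) (by decide)
    rw [← h3, ← Subgroup.orderOf_mk a ha]
    exact orderOf_dvd_natCard _

end KleinFour

section FrattiniCoverAction

variable {D N : Type*} [Group D] [Finite D] [CommGroup N] {ρ : D →* MulAut N}

theorem apply_eq_one_of_omitsOrder {a b : ℕ} (ha : a.Prime) (hb : b.Prime) (hab : a.Coprime b)
    (hbD : b ∣ Nat.card D) (hD : OmitsOrder D (a * b)) (hN : (Nat.card N).Coprime a)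
    (hρ : ∀ d, orderOf d = b → FixedPointFree (ρ d)) {S : Subgroup D} [S.Normal]
    (hS : IsPGroup a S) {s : D} (hs : s ∈ S) : ρ s = 1 := by
  have : Fact b.Prime := ⟨hb⟩
  obtain ⟨y, hy⟩ := exists_prime_orderOf_dvd_card' b hbD
  refine apply_eq_one_of_normalizer_fixedPointFree ρ (V := S) (y := y) ?_ hb
    (hy ▸ pow_orderOf_eq_one y) (fun v hv hyv ↦ ?_) (hρ y hy)
    (coprime_card_of_isPGroup ha hS hN.symm).symm hs
  · exact Subgroup.normalizer_eq_top S ▸ Subgroup.mem_top y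
  · by_contra hv1
    exact hD.not_commute hab (dvd_orderOf_of_isPGroup ha hS hv hv1) hy.symm.dvd hyv.symm

variable [Nontrivial N] {X : Type*} [Group X] {φ : D →* X}

namespace IsFrattiniCover

theorem ker_le_ker [IsSimpleGroup X] (hφ : IsFrattiniCover φ) {c : ℕ} (hc : c.Prime)
    (hcD : c ∣ Nat.card D) (hρ : ∀ d, orderOf d = c → FixedPointFree (ρ d)) : ρ.ker ≤ φ.ker := by
  refine (hφ.le_ker_or_eq_top ρ.ker).resolve_right fun htop ↦ ?_
  have : Fact c.Prime := ⟨hc⟩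
  obtain ⟨d, hd⟩ := exists_prime_orderOf_dvd_card' c hcD
  obtain ⟨n, hn⟩ := exists_ne (1 : N)
  exact hn (hρ d hd n (by rw [ρ.mem_ker.1 (htop ▸ Subgroup.mem_top d), MulAut.one_apply]))

theorem not_dvd_card_ker (hφ : IsFrattiniCover φ) {a b : ℕ} (ha : a.Prime) (hb : b.Prime)
    (hab : a.Coprime b) (hbD : b ∣ Nat.card D) (hD : OmitsOrder D (a * b))
    (hN : (Nat.card N).Coprime a) (hρa : ∀ d, orderOf d = a → FixedPointFree (ρ d))
    (hρb : ∀ d, orderOf d = b → FixedPointFree (ρ d)) : ¬ a ∣ Nat.card φ.ker := by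
  intro hdvd
  have : Fact a.Prime := ⟨ha⟩
  obtain ⟨P, _, hPa, hP⟩ := hφ.exists_normal_isPGroup a
  obtain ⟨⟨g, hg⟩, hga⟩ := exists_prime_orderOf_dvd_card' (G := φ.ker) a hdvd
  rw [Subgroup.orderOf_mk] at hga
  have hzpowers : IsPGroup a (Subgroup.zpowers g) :=
    IsPGroup.of_card (n := 1) (by rw [Nat.card_zpowers, hga, pow_one])
  have hgP : g ∈ P := hP _ hzpowers ⟨Subgroup.mem_zpowers g, hg⟩
  obtain ⟨n, hn⟩ := exists_ne (1 : N)
  refine hn (hρa g hga n ?_)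
  rw [apply_eq_one_of_omitsOrder ha hb hab hbD hD hN hρb hPa hgP, MulAut.one_apply]

variable {φ : D →* A₅}

omit [Finite D] in
theorem dvd_card_of_dvd_sixty (hφ : IsFrattiniCover φ) {c : ℕ} (hc : c ∣ 60) : c ∣ Nat.card D :=
  hc.trans (card_alternatingGroup_five ▸ Subgroup.card_dvd_of_surjective φ hφ.surjective)

open scoped commutatorElement in
theorem exists_apply_commutatorElement_ne_one (hφ : IsFrattiniCover φ) (h15 : OmitsOrder D (3 * 5))
    (hN : (Nat.card N).Coprime 30) (h3 : ∀ d, orderOf d = 3 → FixedPointFree (ρ d))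
    (h5 : ∀ d, orderOf d = 5 → FixedPointFree (ρ d)) :
    ∃ P : Subgroup D, P.Normal ∧ IsPGroup 2 P ∧
      ∃ s t : D, s ^ 2 ∈ P ∧ ⁅s, t⁆ ∈ P ∧ ρ ⁅s, t⁆ ≠ 1 := by
  obtain ⟨V, hV, hVV, h3V⟩ := exists_isElementaryAbelian_two_alternatingGroup_five
  have hker3 : ¬ 3 ∣ Nat.card φ.ker := hφ.not_dvd_card_ker Nat.prime_three Nat.prime_five
    (by norm_num) (hφ.dvd_card_of_dvd_sixty (by norm_num)) h15
    (hN.coprime_dvd_right (by norm_num)) h3 h5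
  obtain ⟨T, hT, hTV, hTρ⟩ := exists_not_isMulCommutative_map hφ.surjective Nat.prime_three
    (by norm_num) hV.isPGroup hVV h3V hker3 ρ
    (hφ.ker_le_ker Nat.prime_three (hφ.dvd_card_of_dvd_sixty (by norm_num)) h3)
    (hN.coprime_dvd_right (by norm_num)) h3
  obtain ⟨P, hP, hP2, hTP⟩ := hφ.exists_normal_isPGroup 2
  refine ⟨P, hP, hP2, ?_⟩
  by_contra! hst
  refine hTρ (.of_comm ?_)
  rintro ⟨_, s, hs, rfl⟩ ⟨_, t, ht, rfl⟩
  have hφs : φ s ∈ V := hTV ▸ Subgroup.mem_map_of_mem φ hs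
  have hφt : φ t ∈ V := hTV ▸ Subgroup.mem_map_of_mem φ ht
  have := hV.isMulCommutative
  have hφst : φ s * φ t = φ t * φ s :=
    congrArg Subtype.val (mul_comm' (⟨φ s, hφs⟩ : V) ⟨φ t, hφt⟩)
  have hs2 : s ^ 2 ∈ P := hTP T hT ⟨T.pow_mem hs 2, φ.mem_ker.2 <|
    (map_pow φ s 2).trans (congrArg Subtype.val (hV.pow_eq_one ⟨φ s, hφs⟩))⟩
  have hstT : ⁅s, t⁆ ∈ T :=
    T.mul_mem (T.mul_mem (T.mul_mem hs ht) (T.inv_mem hs)) (T.inv_mem ht)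
  have hstP : ⁅s, t⁆ ∈ P := hTP T hT ⟨hstT, φ.mem_ker.2 <|
    (map_commutatorElement φ s t).trans (commutatorElement_eq_one_iff_mul_comm.2 hφst)⟩
  have := hst s t hs2 hstP
  rw [map_commutatorElement, commutatorElement_eq_one_iff_mul_comm] at this
  exact Subtype.ext this

theorem not_omitsOrder_two_mul (hφ : IsFrattiniCover φ) (h15 : OmitsOrder D (3 * 5))
    (hN : (Nat.card N).Coprime 30) (h3 : ∀ d, orderOf d = 3 → FixedPointFree (ρ d))
    (h5 : ∀ d, orderOf d = 5 → FixedPointFree (ρ d)) {b : ℕ} (hb : b = 3 ∨ b = 5) :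
    ¬ OmitsOrder D (2 * b) := by
  intro hD
  obtain ⟨P, _, hP2, s, t, -, hstP, hst⟩ := hφ.exists_apply_commutatorElement_ne_one h15 hN h3 h5
  have hN2 := hN.coprime_dvd_right (show 2 ∣ 30 by norm_num)
  obtain rfl | rfl := hb
  · exact hst <| apply_eq_one_of_omitsOrder Nat.prime_two Nat.prime_three (by norm_num)
      (hφ.dvd_card_of_dvd_sixty (by norm_num)) hD hN2 h3 hP2 hstP
  · exact hst <| apply_eq_one_of_omitsOrder Nat.prime_two Nat.prime_five (by norm_num)
      (hφ.dvd_card_of_dvd_sixty (by norm_num)) hD hN2 h5 hP2 hstP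

open scoped commutatorElement in
theorem not_subsingleton_orderOf_eq_two (hφ : IsFrattiniCover φ) (h15 : OmitsOrder D (3 * 5))
    (hN : (Nat.card N).Coprime 30) (h3 : ∀ d, orderOf d = 3 → FixedPointFree (ρ d))
    (h5 : ∀ d, orderOf d = 5 → FixedPointFree (ρ d)) (h2 : ∀ d, orderOf d = 2 → ρ d = 1) :
    ¬ {d : D | orderOf d = 2}.Subsingleton := by
  intro huniq
  obtain ⟨P, _, hP2, s, t, hs2, hstP, hst⟩ :=
    hφ.exists_apply_commutatorElement_ne_one h15 hN h3 h5
  have := isPerfect_of_not_isSolvable not_isSolvable_alternatingGroup_five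
  have := hφ.isPerfect
  have hcenter := le_center_of_isPGroup_two huniq hP2
  have hst2 : ⁅s, t⁆ ^ 2 = 1 :=
    commutatorElement_sq_eq_one_of_mem_center (hcenter hs2) (hcenter hstP)
  exact hst (h2 _ (orderOf_eq_prime hst2 fun h1 ↦ hst (h1 ▸ map_one ρ)))

end IsFrattiniCover

end FrattiniCoverAction

section NormalPSubgroup

theorem exists_isFrattiniCover_of_innerAut_le {S : Type*} [Group S] [IsSimpleGroup S]
    (hS : ¬ Group.IsSolvable S) {G : Type*} [Group G] [Finite G] {ψ : G →* MulAut S}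
    (hψ : innerAut S ≤ ψ.range) : ∃ (D : Subgroup G) (φ : D →* S), IsFrattiniCover φ := by
  obtain ⟨D, φ, hφ, -⟩ := exists_isFrattiniCover hψ
  exact ⟨D, _, hφ.comp_mulEquiv (MonoidHom.ofInjective (conj_injective_of_not_isSolvable hS)).symm⟩

theorem exists_map_eq_range_of_dvd_card_ker {G X : Type*} [Group G] [Finite G] [Group X]
    (ψ : G →* X) {r : ℕ} (hr : r.Prime) (hrψ : r ∣ Nat.card ψ.ker) :
    ∃ M : Subgroup G, M.map ψ = ψ.range ∧
      ∃ E : Subgroup M, E.Normal ∧ E ≠ ⊥ ∧ IsElementaryAbelian r E := by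
  have : Fact r.Prime := ⟨hr⟩
  let P : Sylow r ψ.ker := default
  set T := (P : Subgroup ψ.ker).map ψ.ker.subtype
  refine ⟨Subgroup.normalizer (T : Set G),
    map_eq_range_of_sup_eq_top le_rfl P.normalizer_sup_eq_top, ?_⟩
  have hTr : IsPGroup r (T.subgroupOf (Subgroup.normalizer (T : Set G))) :=
    (P.isPGroup'.map _).comap_of_injective _ (Subgroup.subtype_injective _)
  have hT1 : T.subgroupOf (Subgroup.normalizer (T : Set G)) ≠ ⊥ := by
    rw [Ne, Subgroup.subgroupOf_eq_bot, disjoint_of_le_iff_left_eq_bot Subgroup.le_normalizer,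
      Subgroup.map_eq_bot_iff_of_injective _ ψ.ker.subtype_injective]
    exact P.ne_bot_of_dvd_card hrψ
  obtain ⟨E, hE, -, hE1, hEr⟩ := exists_normal_isElementaryAbelian_le_of_isPGroup hTr hT1
  exact ⟨E, hE, hE1, hEr⟩

variable {G : Type*} [Group G] [Finite G] {ψ : G →* MulAut A₅} {r : ℕ}

open scoped IsMulCommutative in
theorem not_omitsOrder_and_not_subsingleton_of_normal (hψ : innerAut A₅ ≤ ψ.range) (hr : r.Prime)
    (h7 : 7 ≤ r) (h15 : OmitsOrder G (3 * 5)) (h3r : OmitsOrder G (r * 3))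
    (h5r : OmitsOrder G (r * 5)) {N : Subgroup G} [N.Normal] (hN1 : N ≠ ⊥)
    (hN : IsElementaryAbelian r N) :
    (∀ b, b = 3 ∨ b = 5 → ¬ OmitsOrder G (2 * b)) ∧ ¬ {g : G | orderOf g = 2}.Subsingleton := by
  have := hN.isMulCommutative
  have : Nontrivial N := (Subgroup.nontrivial_iff_ne_bot N).2 hN1
  have hcop : ∀ m, 0 < m → m < r → r.Coprime m := fun m hm hmr ↦
    (Nat.coprime_of_lt_prime hm.ne' hmr hr)
  obtain ⟨D, φ, hφ⟩ := exists_isFrattiniCover_of_innerAut_le not_isSolvable_alternatingGroup_five hψ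
  let ρ : D →* MulAut N := MulAut.conjNormal.comp D.subtype
  have h3 : ∀ d, orderOf d = 3 → FixedPointFree (ρ d) := fun d hd ↦
    h3r.fixedPointFree_conjNormal hr (hcop 3 (by lia) (by lia)) hN.isPGroup (by
      rw [Subgroup.orderOf_coe, hd])
  have h5 : ∀ d, orderOf d = 5 → FixedPointFree (ρ d) := fun d hd ↦
    h5r.fixedPointFree_conjNormal hr (hcop 5 (by lia) (by lia)) hN.isPGroup (by
      rw [Subgroup.orderOf_coe, hd])
  have hN30 : (Nat.card N).Coprime 30 := coprime_card_of_isPGroup hr hN.isPGroup <|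
    Nat.Coprime.mul_right (hcop 6 (by lia) (by lia)) (hcop 5 (by lia) (by lia))
  refine ⟨fun b hb h ↦ hφ.not_omitsOrder_two_mul (h15.subgroup D) hN30 h3 h5 hb (h.subgroup D),
    fun h ↦ hφ.not_subsingleton_orderOf_eq_two (h15.subgroup D) hN30 h3 h5 (fun d hd ↦ ?_) ?_⟩
  · have hd2 : orderOf (d : G) = 2 := (Subgroup.orderOf_coe d).trans hd
    ext n
    refine congrArg Subtype.val (conjNormal_apply_eq_self_iff.2 ?_)
    exact (Subgroup.mem_center_iff.1 (mem_center_of_orderOf_eq_two h hd2) n).symm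
  · exact fun d hd e he ↦ Subtype.ext <|
      h ((Subgroup.orderOf_coe d).trans hd) ((Subgroup.orderOf_coe e).trans he)

theorem not_omitsOrder_and_not_subsingleton_of_dvd_card_ker (hψ : innerAut A₅ ≤ ψ.range)
    (hr : r.Prime) (h7 : 7 ≤ r) (hrψ : r ∣ Nat.card ψ.ker) (h15 : OmitsOrder G (3 * 5))
    (h3r : OmitsOrder G (r * 3)) (h5r : OmitsOrder G (r * 5)) :
    (∀ b, b = 3 ∨ b = 5 → ¬ OmitsOrder G (2 * b)) ∧ ¬ {g : G | orderOf g = 2}.Subsingleton := by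
  obtain ⟨M, hM, E, _, hE1, hE⟩ := exists_map_eq_range_of_dvd_card_ker ψ hr hrψ
  obtain ⟨h2b, huniq⟩ := not_omitsOrder_and_not_subsingleton_of_normal (ψ := ψ.comp M.subtype) (by
    rwa [MonoidHom.range_comp, M.range_subtype, hM]) hr h7 (h15.subgroup M) (h3r.subgroup M)
    (h5r.subgroup M) hE1 hE
  refine ⟨fun b hb h ↦ h2b b hb (h.subgroup M), fun h ↦ huniq fun x hx y hy ↦ Subtype.ext <|
    h ((Subgroup.orderOf_coe x).trans hx) ((Subgroup.orderOf_coe y).trans hy)⟩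

end NormalPSubgroup

section TwoRank

/-- The `2`-rank of `G` is at most one: two commuting elements of order `2` coincide. -/
def TwoRankLEOne (G : Type*) [Group G] : Prop :=
  ∀ ⦃a b : G⦄, orderOf a = 2 → orderOf b = 2 → Commute a b → a = b

variable {G H : Type*} [Group G] [Group H]

theorem TwoRankLEOne.of_injective (h : TwoRankLEOne G) {f : H →* G}
    (hf : Function.Injective f) : TwoRankLEOne H := fun a b ha hb hab ↦
  hf (h ((orderOf_injective f hf a).trans ha) ((orderOf_injective f hf b).trans hb) (hab.map f))

theorem TwoRankLEOne.subgroup (h : TwoRankLEOne G) (K : Subgroup G) : TwoRankLEOne K :=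
  h.of_injective K.subtype_injective

theorem mul_sq_eq_one_of_commute {a b : G} (ha : orderOf a = 2) (hb : orderOf b = 2)
    (hab : Commute a b) : (a * b) ^ 2 = 1 := by
  rw [hab.mul_pow, orderOf_dvd_iff_pow_eq_one.1 ha.dvd, orderOf_dvd_iff_pow_eq_one.1 hb.dvd,
    one_mul]

theorem eq_of_mul_eq_one_of_orderOf_eq_two {a b : G} (hb : orderOf b = 2) (hab : a * b = 1) :
    a = b := by
  rw [eq_inv_of_mul_eq_one_left hab, inv_eq_iff_mul_eq_one, ← sq,
    orderOf_dvd_iff_pow_eq_one.1 hb.dvd]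

theorem eq_one_of_pow_eq_one_of_not_dvd_card {p : ℕ} [Fact p.Prime] {K : Subgroup G}
    (hK : ¬ p ∣ Nat.card K) {x : G} (hx : x ∈ K) (hxp : x ^ p = 1) : x = 1 := by
  by_contra hne
  refine hK ?_
  rw [← orderOf_eq_prime hxp hne, ← Subgroup.orderOf_mk x hx]
  exact orderOf_dvd_natCard _

theorem TwoRankLEOne.of_quotient {N : Subgroup G} [N.Normal] (h : TwoRankLEOne (G ⧸ N))
    (hN : ¬ 2 ∣ Nat.card N) : TwoRankLEOne G := by
  intro a b ha hb hab
  have hmk (x : G) (hx : orderOf x = 2) : orderOf (QuotientGroup.mk' N x) = 2 := by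
    have hx2 : x ^ 2 = 1 := orderOf_dvd_iff_pow_eq_one.1 hx.dvd
    refine orderOf_eq_prime (by rw [← map_pow, hx2, map_one]) fun h1 ↦ ?_
    rw [eq_one_of_pow_eq_one_of_not_dvd_card hN ((QuotientGroup.eq_one_iff x).1 h1) hx2,
      orderOf_one] at hx
    exact absurd hx (by norm_num)
  have hq := h (hmk a ha) (hmk b hb) (hab.map _)
  have hab2 := mul_sq_eq_one_of_commute ha hb hab
  refine eq_of_mul_eq_one_of_orderOf_eq_two hb
    (eq_one_of_pow_eq_one_of_not_dvd_card hN ((QuotientGroup.eq_one_iff _).1 ?_) hab2)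
  change QuotientGroup.mk' N (a * b) = 1
  rw [map_mul, hq, ← map_mul, ← sq, orderOf_dvd_iff_pow_eq_one.1 hb.dvd, map_one]

variable [Finite G]

open scoped IsMulCommutative in
theorem OmitsOrder.twoRankLEOne {q : ℕ} (h : OmitsOrder G (2 * q)) (hq : q.Prime) (hq2 : q ≠ 2)
    {N : Subgroup G} [N.Normal] (hN1 : N ≠ ⊥) (hN : IsElementaryAbelian q N) :
    TwoRankLEOne G := by
  intro a b ha hb hab
  have := hN.isMulCommutative
  have hfix (x : G) (hx : orderOf x = 2) :
      FixedPointFree (MulAut.conjNormal x : MulAut N) :=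
    (mul_comm 2 q ▸ h).fixedPointFree_conjNormal hq ((Nat.coprime_primes hq Nat.prime_two).2 hq2)
      hN.isPGroup hx.symm.dvd
  have hinv (x : G) (hx : orderOf x = 2) (n : N) : MulAut.conjNormal x n = n⁻¹ :=
    congrFun ((hfix x hx).coe_eq_inv_of_involutive fun n ↦ by
      rw [← MulAut.mul_apply, ← map_mul, ← sq, orderOf_dvd_iff_pow_eq_one.1 hx.dvd, map_one,
        MulAut.one_apply]) n
  refine eq_of_mul_eq_one_of_orderOf_eq_two hb (by_contra fun hne ↦ ?_)
  have hab2 : orderOf (a * b) = 2 := orderOf_eq_prime (mul_sq_eq_one_of_commute ha hb hab) hne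
  obtain ⟨n, hn⟩ := Subgroup.ne_bot_iff_exists_ne_one.1 hN1
  refine hn (hfix _ hab2 n ?_)
  rw [map_mul, MulAut.mul_apply, hinv b hb, hinv a ha, inv_inv]

theorem TwoRankLEOne.subsingleton_orderOf_eq_two (h : TwoRankLEOne G) (hG : IsPGroup 2 G) :
    {x : G | orderOf x = 2}.Subsingleton := by
  intro x hx y hy
  have : Nontrivial G := ⟨x, 1, fun hx1 ↦ by simp [hx1] at hx⟩
  have := hG.center_nontrivial
  obtain ⟨c, hc⟩ := exists_prime_orderOf_dvd_card' 2
    (dvd_card_of_isPGroup Nat.prime_two (hG.to_subgroup (Subgroup.center G)))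
  rw [← Subgroup.orderOf_coe] at hc
  rw [h hx hc (Subgroup.mem_center_iff.1 c.2 x), h hy hc (Subgroup.mem_center_iff.1 c.2 y)]

omit [Finite G] in
theorem exists_mem_sylow_of_orderOf_eq_prime {p : ℕ} [Fact p.Prime] {z : G} (hz : orderOf z = p) :
    ∃ P : Sylow p G, z ∈ P := by
  have hP : IsPGroup p (Subgroup.zpowers z) :=
    IsPGroup.of_card (n := 1) (by rw [Nat.card_zpowers, hz, pow_one])
  exact hP.exists_le_sylow.imp fun P hP ↦ hP (Subgroup.mem_zpowers z)

theorem TwoRankLEOne.isConj (h : TwoRankLEOne G) {z w : G} (hz : orderOf z = 2)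
    (hw : orderOf w = 2) : IsConj z w := by
  obtain ⟨P, hP⟩ := exists_mem_sylow_of_orderOf_eq_prime hz
  obtain ⟨Q, hQ⟩ := exists_mem_sylow_of_orderOf_eq_prime hw
  obtain ⟨x, rfl⟩ := MulAction.exists_smul_eq G P Q
  have hxz : x * z * x⁻¹ ∈ x • P := Subgroup.smul_mem_pointwise_smul z (MulAut.conj x) _ hP
  refine isConj_iff.2 ⟨x, congrArg Subtype.val <|
    (h.subgroup _).subsingleton_orderOf_eq_two (x • P).isPGroup' (?_ : orderOf ⟨_, hxz⟩ = 2)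
      (?_ : orderOf ⟨w, hQ⟩ = 2)⟩
  · rw [Subgroup.orderOf_mk]
    exact ((MulAut.conj x).orderOf_eq z).trans hz
  · rwa [Subgroup.orderOf_mk]

theorem TwoRankLEOne.of_surjective (h : TwoRankLEOne G) {f : G →* H}
    (hf : Function.Surjective f) (hker : ¬ 2 ∣ Nat.card f.ker) : TwoRankLEOne H := by
  intro x y hx hy hxy
  have hV : IsElementaryAbelian 2 (Subgroup.closure {x, y}) := .closure
    (by rintro _ (rfl | rfl) _ (rfl | rfl); exacts [rfl, hxy, hxy.symm, rfl])
    (by rintro _ (rfl | rfl); exacts [hx ▸ pow_orderOf_eq_one _, hy ▸ pow_orderOf_eq_one _])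
  obtain ⟨T, hT, hTV, -⟩ := exists_isPGroup_map_eq hf hV.isPGroup
  have hTker {t : G} (ht : t ∈ T) (hft : f t = 1) : t = 1 := by
    by_contra hne
    have h2 := dvd_orderOf_of_isPGroup Nat.prime_two hT ht hne
    rw [← Subgroup.orderOf_mk t (f.mem_ker.2 hft)] at h2
    exact hker (h2.trans (orderOf_dvd_natCard _))
  have hlift {v : H} (hv : v ∈ ({x, y} : Set H)) : ∃ t ∈ T, f t = v :=
    Subgroup.mem_map.1 (hTV.ge (Subgroup.subset_closure hv))
  obtain ⟨s, hs, rfl⟩ := hlift (Set.mem_insert x _)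
  obtain ⟨t, ht, rfl⟩ := hlift (Set.mem_insert_of_mem _ rfl)
  have horder {u : G} (hu : u ∈ T) (hfu : orderOf (f u) = 2) : orderOf u = 2 :=
    orderOf_eq_prime (hTker (pow_mem hu 2) (by rw [map_pow, ← hfu, pow_orderOf_eq_one]))
      fun h1 ↦ by simp [h1] at hfu
  have hcomm : Commute s t :=
    mul_inv_eq_one.1 (hTker (mul_mem (mul_mem hs ht) (inv_mem (mul_mem ht hs))) (by
      rw [map_mul, map_inv, map_mul, map_mul, hxy.eq, mul_inv_cancel]))
  rw [h (horder hs hx) (horder ht hy) hcomm]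

theorem not_twoRankLEOne_alternatingGroup_five : ¬ TwoRankLEOne A₅ := by
  intro h
  let b : A₅ := ⟨Equiv.swap 0 1 * Equiv.swap 2 3, by rw [Equiv.Perm.mem_alternatingGroup]; decide⟩
  let c : A₅ := ⟨Equiv.swap 0 2 * Equiv.swap 1 3, by rw [Equiv.Perm.mem_alternatingGroup]; decide⟩
  have hb : orderOf b = 2 := orderOf_eq_prime (by decide) (by decide)
  have hc : orderOf c = 2 := orderOf_eq_prime (by decide) (by decide)
  exact absurd (h hb hc (by decide : b * c = c * b)) (by decide)

theorem TwoRankLEOne.map_centralizer_eq_range (h : TwoRankLEOne G) (f : G →* H)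
    (hker : 2 ∣ Nat.card f.ker) {z : G} (hz : orderOf z = 2) :
    (Subgroup.centralizer {z}).map f = f.range := by
  obtain ⟨⟨u, hu⟩, hu2⟩ := exists_prime_orderOf_dvd_card' 2 hker
  rw [Subgroup.orderOf_mk] at hu2
  have hmem {w : G} (hw : orderOf w = 2) : w ∈ f.ker := by
    obtain ⟨x, rfl⟩ := isConj_iff.1 (h.isConj hu2 hw)
    exact f.normal_ker.conj_mem u hu x
  refine map_eq_range_of_sup_eq_top le_rfl (eq_top_iff.2 fun x _ ↦ ?_)
  have hxz : orderOf (x * z * x⁻¹) = 2 := ((MulAut.conj x).orderOf_eq z).trans hz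
  obtain ⟨⟨k, hk⟩, hkx⟩ := isConj_iff.1 ((h.subgroup f.ker).isConj
    (z := ⟨_, hmem hxz⟩) (w := ⟨z, hmem hz⟩) (by rwa [Subgroup.orderOf_mk])
    (by rwa [Subgroup.orderOf_mk]))
  replace hkx : k * (x * z * x⁻¹) * k⁻¹ = z := congrArg Subtype.val hkx
  have hkxz : k * x ∈ Subgroup.centralizer {z} := by
    rw [Subgroup.mem_centralizer_singleton_iff, ← mul_inv_eq_iff_eq_mul]
    simpa only [mul_inv_rev, mul_assoc] using hkx
  rw [sup_comm, ← inv_mul_cancel_left k x]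
  exact Subgroup.mul_mem_sup (inv_mem hk) hkxz

end TwoRank

section KernelPrimes

variable {G S : Type*} [Group G] [Group S]

theorem commutator_le_centralizer_of_isCyclic (E : Subgroup G) [E.Normal] [IsCyclic E] :
    commutator G ≤ Subgroup.centralizer (E : Set G) := by
  let f : G →* (ZMod (Nat.card E))ˣ :=
    (IsCyclic.mulAutMulEquiv E).toMonoidHom.comp MulAut.conjNormal
  intro g hg
  have hfg : IsCyclic.mulAutMulEquiv E (MulAut.conjNormal g) = 1 :=
    f.mem_ker.1 (Abelianization.commutator_subset_ker f hg)
  rw [EmbeddingLike.map_eq_one_iff] at hfg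
  refine Subgroup.mem_centralizer_iff.2 fun e he ↦ ?_
  have hge := conjNormal_apply_eq_self_iff.1 (DFunLike.congr_fun hfg (⟨e, he⟩ : E))
  exact hge.symm

theorem innerAut_le_map_commutator [Group.IsPerfect S] {ψ : G →* MulAut S}
    (hψ : innerAut S ≤ ψ.range) : innerAut S ≤ (commutator G).map ψ := by
  rw [commutator_def, Subgroup.map_commutator, ← MonoidHom.range_eq_map, innerAut,
    MonoidHom.range_eq_map, ← Group.IsPerfect.commutator_eq_top, commutator_def,
    Subgroup.map_commutator, ← MonoidHom.range_eq_map]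
  exact Subgroup.commutator_mono hψ hψ

variable [Finite G] [IsSimpleGroup S]

-- A normal elementary abelian `q`-subgroup `E` of a supplement `M` of `ψ.ker` acts fixed point
-- freely on `N`, so it is cyclic, and its centralizer contains the commutator subgroup of `M`,
-- which covers `innerAut S` and hence has elements of order `a`.
open scoped IsMulCommutative in
theorem not_omitsOrder_of_dvd_card_ker [Finite S] (hS : ¬ Group.IsSolvable S)
    {ψ : G →* MulAut S} (hψ : innerAut S ≤ ψ.range) {a q : ℕ} (ha : a.Prime) (hq : q.Prime)
    (haq : a ≠ q) (haS : a ∣ Nat.card S) (hqψ : q ∣ Nat.card ψ.ker) {N : Subgroup G} [N.Normal]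
    (hN1 : N ≠ ⊥) (hN : IsElementaryAbelian a N) : ¬ OmitsOrder G (a * q) := by
  intro h
  have := isPerfect_of_not_isSolvable hS
  have : Fact a.Prime := ⟨ha⟩
  have hcop : a.Coprime q := (Nat.coprime_primes ha hq).2 haq
  obtain ⟨M, hM, E, _, hE1, hE⟩ := exists_map_eq_range_of_dvd_card_ker ψ hq hqψ
  have := hN.isMulCommutative
  have := hE.isMulCommutative
  have hqE (e : E) (he : e ≠ 1) : q ∣ orderOf (e : G) := by
    rw [Subgroup.orderOf_coe]
    exact dvd_orderOf_of_isPGroup hq hE.isPGroup e.2 (by simpa using he)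
  let ρ : E →* MulAut N := MulAut.conjNormal.comp (M.subtype.comp E.subtype)
  obtain ⟨n, hn⟩ := Subgroup.ne_bot_iff_exists_ne_one.1 hN1
  have hnq : n ^ q ≠ 1 := fun hnq ↦ hn <| by
    simpa only [hcop.gcd_eq_one, pow_one] using pow_gcd_eq_one.2 ⟨hN.pow_eq_one n, hnq⟩
  have : IsCyclic E := isCyclic_of_fixedPointFree ρ hq hE.pow_eq_one
    (fun e he ↦ h.fixedPointFree_conjNormal ha hcop hN.isPGroup (hqE e he)) hnq
  obtain ⟨s, hs⟩ := exists_prime_orderOf_dvd_card' a haS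
  obtain ⟨g, hg, hgs⟩ := innerAut_le_map_commutator (ψ := ψ.comp M.subtype)
    (by rwa [MonoidHom.range_comp, M.range_subtype, hM]) ⟨s, rfl⟩
  obtain ⟨e, he⟩ := Subgroup.ne_bot_iff_exists_ne_one.1 hE1
  have hag : a ∣ orderOf (g : G) := by
    rw [Subgroup.orderOf_coe, ← hs,
      ← orderOf_injective _ (conj_injective_of_not_isSolvable hS), ← hgs]
    exact orderOf_map_dvd _ g
  have hge : Commute g (e : M) :=
    (Subgroup.mem_centralizer_iff.1 (commutator_le_centralizer_of_isCyclic E hg) e e.2).symm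
  exact h.not_commute hcop hag (hqE e he) (hge.map M.subtype)

omit [Finite G] [IsSimpleGroup S] in
theorem IsAlmostSimpleQuotient.lift {ψ : G →* MulAut S} (hψ : IsAlmostSimpleQuotient ψ)
    {N : Subgroup G} [N.Normal] (hN : N ≤ ψ.ker) :
    IsAlmostSimpleQuotient (QuotientGroup.lift N ψ hN) where
  innerAut_le_range := fun s hs ↦ by
    obtain ⟨g, rfl⟩ := hψ.innerAut_le_range hs
    exact ⟨QuotientGroup.mk' N g, rfl⟩
  isSolvable_ker := by
    have := hψ.isSolvable_ker
    rw [QuotientGroup.ker_lift]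
    exact Group.isSolvable_of_surjective ((QuotientGroup.mk' N).subgroupMap_surjective ψ.ker)

theorem dvd_card_map {H : Type*} [Group H] (f : G →* H) {K : Subgroup G} {q : ℕ} (hq : q.Prime)
    (hK : q ∣ Nat.card K) (hf : ¬ q ∣ Nat.card f.ker) : q ∣ Nat.card (K.map f) := by
  have : Fact q.Prime := ⟨hq⟩
  obtain ⟨⟨x, hx⟩, hxq⟩ := exists_prime_orderOf_dvd_card' q hK
  rw [Subgroup.orderOf_mk] at hxq
  have hxq1 : x ^ q = 1 := hxq ▸ pow_orderOf_eq_one x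
  have hx1 : x ≠ 1 := fun hx1 ↦ hq.ne_one (by rw [← hxq, hx1, orderOf_one])
  have hfxq : orderOf (f x) = q :=
    orderOf_eq_prime (by rw [← map_pow, hxq1, map_one]) fun hfx ↦
      hx1 (eq_one_of_pow_eq_one_of_not_dvd_card hf (f.mem_ker.2 hfx) hxq1)
  rw [← hfxq, ← Subgroup.orderOf_mk (f x) (Subgroup.mem_map_of_mem f hx)]
  exact orderOf_dvd_natCard _

theorem dvd_card_ker {H : Type*} [Group H] (f : G →* H) {q : ℕ} (hq : q.Prime)
    (hG : q ∣ Nat.card G) (hH : ¬ q ∣ Nat.card H) : q ∣ Nat.card f.ker := by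
  by_contra hf
  exact hH ((dvd_card_map f (K := ⊤) hq (by rwa [Subgroup.card_top]) hf).trans
    (Subgroup.card_subgroup_dvd_card _))

theorem IsAlmostSimpleQuotient.twoRankLEOne [Finite S] (hS : ¬ Group.IsSolvable S)
    (h2S : 2 ∣ Nat.card S) {ψ : G →* MulAut S} (hψ : IsAlmostSimpleQuotient ψ) {q : ℕ}
    (hq : q.Prime) (hq2 : q ≠ 2) (hqψ : q ∣ Nat.card ψ.ker) (h2q : OmitsOrder G (2 * q)) :
    TwoRankLEOne G := by
  induction hn : Nat.card G using Nat.strong_induction_on generalizing G with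
  | _ n ih =>
  have hker : ψ.ker ≠ ⊥ := fun hbot ↦ by
    rw [hbot, Subgroup.card_bot, Nat.dvd_one] at hqψ
    exact hq.ne_one hqψ
  obtain ⟨N, _, hNψ, hN1, l, hl, hN⟩ :=
    exists_normal_isElementaryAbelian_le ψ.ker hψ.isSolvable_ker hker
  have hcard {m : ℕ} (hm : m.Prime) (hml : l ≠ m) : ¬ m ∣ Nat.card N := fun h ↦
    (Nat.Prime.coprime_iff_not_dvd hm).1
      (coprime_card_of_isPGroup hl hN.isPGroup ((Nat.coprime_primes hl hm).2 hml)).symm h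
  rcases eq_or_ne l 2 with rfl | hl2
  · exact absurd h2q
      (not_omitsOrder_of_dvd_card_ker hS hψ.innerAut_le_range hl hq hq2.symm h2S hqψ hN1 hN)
  rcases eq_or_ne l q with rfl | hlq
  · exact h2q.twoRankLEOne hq hq2 hN1 hN
  · have hqN : q ∣ Nat.card (QuotientGroup.lift N ψ hNψ).ker := by
      rw [QuotientGroup.ker_lift]
      exact dvd_card_map _ hq hqψ (by rw [QuotientGroup.ker_mk']; exact hcard hq hlq)
    exact (ih _ (hn ▸ card_quotient_lt_card hN1) (hψ.lift hNψ) hqN (h2q.quotient N) rfl).of_quotient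
      (hcard Nat.prime_two hl2)

end KernelPrimes

section NonsolvableCase

variable {G : Type*} [Group G] [Finite G] {ψ : G →* MulAut A₅}

theorem TwoRankLEOne.two_dvd_card_ker (h : TwoRankLEOne G) (hψ : innerAut A₅ ≤ ψ.range) :
    2 ∣ Nat.card ψ.ker := by
  by_contra hker
  have hrange : TwoRankLEOne ψ.range :=
    h.of_surjective ψ.rangeRestrict_surjective (by rwa [ψ.ker_rangeRestrict])
  refine not_twoRankLEOne_alternatingGroup_five (hrange.of_injective
    (f := MulAut.conj.codRestrict ψ.range fun s ↦ hψ ⟨s, rfl⟩) ?_)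
  exact (MonoidHom.injective_codRestrict _ _ _).2
    (conj_injective_of_not_isSolvable not_isSolvable_alternatingGroup_five)

-- The centralizer of an involution `z` still covers `innerAut A₅`, but `z` is its only involution.
theorem TwoRankLEOne.omitsOrder_two_mul (h : TwoRankLEOne G) (hψ : innerAut A₅ ≤ ψ.range)
    (h15 : OmitsOrder G (3 * 5)) {r : ℕ} (hr : r.Prime) (h7 : 7 ≤ r) (h3r : OmitsOrder G (r * 3))
    (h5r : OmitsOrder G (r * 5)) : OmitsOrder G (2 * r) := by
  rintro ⟨g, hg⟩
  have hz : orderOf (g ^ r) = 2 := by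
    rw [orderOf_pow_of_dvd hr.ne_zero (hg ▸ dvd_mul_left r 2), hg, Nat.mul_div_cancel _ hr.pos]
  set C := Subgroup.centralizer {g ^ r}
  have hgC : g ∈ C :=
    Subgroup.mem_centralizer_singleton_iff.2 (Commute.self_pow g r)
  have hCψ : innerAut A₅ ≤ (ψ.comp C.subtype).range := by
    rwa [MonoidHom.range_comp, C.range_subtype,
      h.map_centralizer_eq_range ψ (h.two_dvd_card_ker hψ) hz]
  have hC2 (x : C) (hx : orderOf x = 2) : (x : G) = g ^ r :=
    h ((Subgroup.orderOf_coe x).trans hx) hz (Subgroup.mem_centralizer_singleton_iff.1 x.2)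
  have hrC : r ∣ Nat.card C := by
    refine (hg ▸ dvd_mul_left r 2 : r ∣ orderOf g).trans ?_
    rw [← Subgroup.orderOf_mk g hgC]
    exact orderOf_dvd_natCard _
  exact (not_omitsOrder_and_not_subsingleton_of_dvd_card_ker hCψ hr h7
    (dvd_card_ker _ hr hrC (not_dvd_card_mulAut_alternatingGroup_five hr h7)) (h15.subgroup C)
    (h3r.subgroup C) (h5r.subgroup C)).2 fun x hx y hy ↦
      Subtype.ext ((hC2 x hx).trans (hC2 y hy).symm)

theorem seven_le_of_prime_of_notMem {r : ℕ} (hr : r.Prime) (hr' : r ∉ ({2, 3, 5} : Set ℕ)) :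
    7 ≤ r := by
  simp only [Set.mem_insert_iff, Set.mem_singleton_iff, not_or] at hr'
  have h4 : r ≠ 4 := by rintro rfl; exact absurd hr (by norm_num)
  have h6 : r ≠ 6 := by rintro rfl; exact absurd hr (by norm_num)
  have := hr.two_le
  lia

theorem IsAlmostSimpleQuotient.omitsOrder_two_mul (hψ : IsAlmostSimpleQuotient ψ)
    (h15 : OmitsOrder G (3 * 5)) {q : ℕ} (hq : q.Prime) (hq2 : q ≠ 2) (hqG : q ∣ Nat.card G)
    (h2q : OmitsOrder G (2 * q)) {r : ℕ} (hr : r.Prime) (h7 : 7 ≤ r) (hrG : r ∣ Nat.card G)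
    (h3r : OmitsOrder G (r * 3)) (h5r : OmitsOrder G (r * 5)) : OmitsOrder G (2 * r) := by
  have hS := hψ.innerAut_le_range
  have hker {s : ℕ} (hs : s.Prime) (h7s : 7 ≤ s) (hsG : s ∣ Nat.card G) : s ∣ Nat.card ψ.ker :=
    dvd_card_ker ψ hs hsG (not_dvd_card_mulAut_alternatingGroup_five hs h7s)
  have hq35 : ¬ (q = 3 ∨ q = 5) := fun hq35 ↦
    (not_omitsOrder_and_not_subsingleton_of_dvd_card_ker hS hr h7 (hker hr h7 hrG) h15 h3r h5r).1
      q hq35 h2q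
  have h7q : 7 ≤ q := seven_le_of_prime_of_notMem hq (by simp [hq2, not_or.1 hq35])
  have h2S : 2 ∣ Nat.card A₅ := by rw [card_alternatingGroup_five]; norm_num
  exact (hψ.twoRankLEOne not_isSolvable_alternatingGroup_five h2S hq hq2 (hker hq h7q hqG)
    h2q).omitsOrder_two_mul hS h15 hr h7 h3r h5r

end NonsolvableCase

theorem not_omitsOrder_three_mul_of_isSolvable {G : Type*} [Group G] [Finite G]
    (hG : Group.IsSolvable G) (h3 : 3 ∣ Nat.card G) (h5 : 5 ∣ Nat.card G) {r : ℕ} (hr : r.Prime)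
    (h7 : 7 ≤ r) (hrG : r ∣ Nat.card G) (h15 : OmitsOrder G (3 * 5))
    (h5r : OmitsOrder G (5 * r)) : ¬ OmitsOrder G (3 * r) := fun h3r ↦ by
  have hne : Nat.card G ≠ 0 := Nat.card_pos.ne'
  have : Std.Symm fun x y ↦ OmitsOrder G (x * y) := ⟨fun x y h ↦ by rwa [mul_comm]⟩
  have hcard : ({3, 5, r} : Finset ℕ).card ≤ 2 := by
    refine card_le_two_of_pairwise_omitsOrder hG ?_ ?_
    · simp [Finset.insert_subset_iff, Nat.prime_three, Nat.prime_five, hr, h3, h5, hrG, hne]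
    · simp [Set.pairwise_insert_of_symm, h15, h3r, h5r]
  rw [Finset.card_eq_three.2 ⟨3, 5, r, by lia, by lia, by lia, rfl⟩] at hcard
  exact absurd hcard (by decide)

/-- In a pseudo-solvable group with a `{p,3,5}` triangle in the prime-graph complement
and an edge `2 - q` for some odd prime `q`, no prime `r ∉ {2,3,5}` can have the
complement edges `3 - r` and `5 - r` without also having `2 - r`. -/
theorem no_figure3c_together_with_2q_edge
    (G : Type*) [Group G] [Finite G] (hG : IsPseudoSolvable G)
    (p : ℕ) (hp : p.Prime) (hp' : p ∉ ({2, 3, 5} : Set ℕ))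
    (hpd : p ∣ Nat.card G) (h3d : 3 ∣ Nat.card G) (h5d : 5 ∣ Nat.card G)
    (h3p : ¬ ∃ g : G, orderOf g = 3 * p)
    (h5p : ¬ ∃ g : G, orderOf g = 5 * p)
    (h15 : ¬ ∃ g : G, orderOf g = 15)
    (q : ℕ) (hq : q.Prime) (hq2 : q ≠ 2) (hqd : q ∣ Nat.card G)
    (h2q : ¬ ∃ g : G, orderOf g = 2 * q) :
    ∀ r : ℕ, r.Prime → r ∣ Nat.card G → r ∉ ({2, 3, 5} : Set ℕ) →
      (¬ ∃ g : G, orderOf g = 3 * r) → (¬ ∃ g : G, orderOf g = 5 * r) →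
      ¬ ∃ g : G, orderOf g = 2 * r := by
  intro r hr hrd hr' h3r h5r
  have h7 : 7 ≤ r := seven_le_of_prime_of_notMem hr hr'
  rcases hG.isSolvable_or_isAlmostSimpleQuotient h15 with hsolv | ⟨ψ, hψ⟩
  · exact absurd h3r (not_omitsOrder_three_mul_of_isSolvable hsolv h3d h5d hr h7 hrd h15 h5r)
  · exact hψ.omitsOrder_two_mul h15 hq hq2 hqd h2q hr h7 hrd (mul_comm 3 r ▸ h3r)
      (mul_comm 5 r ▸ h5r)
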